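/- arXiv:2209.07346 — 4 statements merged into one kernel-verified Lean document; each statement's English description precedes it below -/
import Mathlib

section
/- Let G be a group and let ρ₁ and ρ₂ be semisimple 3-dimensional complex representations of G, both with trivial determinant. If the 7-dimensional representations ρ₁ ⊕ ρ₁* ⊕ 1 and ρ₂ ⊕ ρ₂* ⊕ 1 are isomorphic, then ρ₁ ≅ ρ₂ or ρ₁ ≅ ρ₂*. -/
open Module

variable {G : Type*} [Group G]

/-- A submodule is invariant under a representation. -/
def IsInvariantSubmodule {V : Type*} [AddCommGroup V] [Module ℂ V]
    (ρ : Representation ℂ G V) (p : Submodule ℂ V) : Prop :=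
  ∀ g : G, ∀ v ∈ p, ρ g v ∈ p

/-- A submodule is an irreducible subrepresentation: it is invariant, nonzero, and contains
no invariant submodules other than `⊥` and itself. -/
def IsIrreducibleSubrep {V : Type*} [AddCommGroup V] [Module ℂ V]
    (ρ : Representation ℂ G V) (p : Submodule ℂ V) : Prop :=
  IsInvariantSubmodule ρ p ∧ p ≠ ⊥ ∧
    ∀ q : Submodule ℂ V, IsInvariantSubmodule ρ q → q ≤ p → q = ⊥ ∨ q = p

/-- A representation is irreducible: the space is nonzero and has no invariant subspaces
other than `0` and the whole space. -/
def IsIrreducibleRep {V : Type*} [AddCommGroup V] [Module ℂ V]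
    (ρ : Representation ℂ G V) : Prop :=
  Nontrivial V ∧ ∀ p : Submodule ℂ V, IsInvariantSubmodule ρ p → p = ⊥ ∨ p = ⊤

/-- A representation is semisimple: the space is an (internal) direct sum of irreducible
subrepresentations. -/
def IsSemisimpleRep {V : Type*} [AddCommGroup V] [Module ℂ V]
    (ρ : Representation ℂ G V) : Prop :=
  ∃ (ι : Type) (s : ι → Submodule ℂ V),
    (∀ i, IsIrreducibleSubrep ρ (s i)) ∧ iSupIndep s ∧ iSup s = ⊤

/-- Two representations are isomorphic: there is a `G`-equivariant linear isomorphism. -/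
def RepIso {V W : Type*} [AddCommGroup V] [Module ℂ V] [AddCommGroup W] [Module ℂ W]
    (ρ : Representation ℂ G V) (σ : Representation ℂ G W) : Prop :=
  ∃ e : V ≃ₗ[ℂ] W, ∀ (g : G) (v : V), e (ρ g v) = σ g (e v)

/-- The seven-dimensional representation `ρ ⊕ ρ* ⊕ 1` on `V × V* × ℂ`, where `ρ*` is the
dual (contragredient) representation and `1` is the one-dimensional trivial representation. -/
noncomputable def repSum7 {V : Type*} [AddCommGroup V] [Module ℂ V]
    (ρ : Representation ℂ G V) : Representation ℂ G (V × Module.Dual ℂ V × ℂ) where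
  toFun g := (ρ g).prodMap (((ρ.dual) g).prodMap LinearMap.id)
  map_one' := by
    refine LinearMap.ext fun x => ?_
    simp [LinearMap.prodMap_apply, Module.Dual.transpose_apply, Module.End.one_eq_id]
  map_mul' g h := by
    refine LinearMap.ext fun x => ?_
    simp [LinearMap.prodMap_apply, Module.End.mul_apply, Module.Dual.transpose_apply,
      Module.End.mul_eq_comp, LinearMap.comp_assoc]

/-!
Krull–Schmidt: if `ρ₁` has an indecomposable direct summand `α` of dimension at least two, then by
Fitting's lemma `α` is a direct summand of `ρ₂` or of `ρ₂*`. Its complements there and in `ρ₁` have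
dimension at most one, so the determinant condition makes them isomorphic. The same argument applies
with `ρ₁` and `ρ₂` exchanged. If neither has such a summand, both are direct sums of characters, and
the claim is about multisets `s`, `t` of three elements with product `1` in an abelian group:
`s ∪ s⁻¹ = t ∪ t⁻¹` (with multiplicity) implies `t = s` or `t = s⁻¹`.
-/

section DirectSummand

open Representation

variable {k M G A V W X : Type*} [CommRing k] [Monoid M] [Group G]
  [AddCommGroup A] [Module k A] [AddCommGroup V] [Module k V]
  [AddCommGroup W] [Module k W] [AddCommGroup X] [Module k X]
  {α : Representation k M A} {ρ : Representation k M V}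
  {σ : Representation k M W} {τ : Representation k M X}

/-- `α` is, up to isomorphism, a direct summand of `ρ`, encoded as a split injection `α → ρ`. -/
def IsDirectSummand (α : Representation k M A) (ρ : Representation k M V) : Prop :=
  ∃ (s : α.IntertwiningMap ρ) (r : ρ.IntertwiningMap α), r.comp s = .id α

theorem isDirectSummand_of_equiv (e : ρ.Equiv σ) : IsDirectSummand ρ σ :=
  ⟨e.toIntertwiningMap, e.symm.toIntertwiningMap, by ext; simp⟩

theorem isDirectSummand_prod_left : IsDirectSummand ρ (ρ.prod σ) :=
  ⟨.inl k ρ σ, .fst k ρ σ, IntertwiningMap.fst_comp_inl⟩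

theorem isDirectSummand_prod_right : IsDirectSummand σ (ρ.prod σ) :=
  ⟨.inr k ρ σ, .snd k ρ σ, IntertwiningMap.snd_comp_inr⟩

theorem IsDirectSummand.trans (hα : IsDirectSummand α ρ) (hρ : IsDirectSummand ρ σ) :
    IsDirectSummand α σ := by
  obtain ⟨s, r, hrs⟩ := hα
  obtain ⟨s', r', hrs'⟩ := hρ
  refine ⟨s'.comp s, r.comp r', IntertwiningMap.ext (LinearMap.ext fun a => ?_)⟩
  have h' : r' (s' (s a)) = s a := congr($hrs' (s a))
  have h : r (s a) = a := congr($hrs a)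
  simp [h, h']

theorem isDirectSummand_of_bijective_comp (s : α.IntertwiningMap ρ) (r : ρ.IntertwiningMap α)
    (h : Function.Bijective (r.comp s)) : IsDirectSummand α ρ := by
  let e : α.Equiv α := (r.comp s).ofBijective h
  refine ⟨s, e.symm.toIntertwiningMap.comp r, IntertwiningMap.ext (LinearMap.ext fun a => ?_)⟩
  exact e.symm_apply_apply a

theorem IsDirectSummand.finrank_le [StrongRankCondition k] [Module.Finite k V]
    (h : IsDirectSummand α ρ) : finrank k A ≤ finrank k V := by
  obtain ⟨s, r, hrs⟩ := h
  exact LinearMap.finrank_le_finrank_of_injective (f := s.toLinearMap)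
    (Function.LeftInverse.injective (g := r) fun a => congr($hrs a))

theorem IsDirectSummand.exists_prod_equiv (h : IsDirectSummand α ρ) :
    ∃ c : Subrepresentation ρ, Nonempty ((α.prod c.toRepresentation).Equiv ρ) := by
  obtain ⟨s, r, hrs⟩ := h
  have hrs' (a : A) : r (s a) = a := congr($hrs a)
  let f : A × r.ker.toSubmodule →ₗ[k] V := s.toLinearMap.coprod r.ker.toSubmodule.subtype
  have f_inj : Function.Injective f := by
    rw [injective_iff_map_eq_zero]
    rintro ⟨a, c, hc⟩ hac
    have hac : s a + c = 0 := hac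
    have hc : r c = 0 := hc
    obtain rfl : a = 0 := by simpa [hrs', hc] using congr(r $hac)
    simpa using hac
  have f_surj : Function.Surjective f := fun v =>
    ⟨(r v, ⟨v - s (r v), by simp [IntertwiningMap.ker, hrs']⟩), by simp [f]⟩
  refine ⟨r.ker, ⟨.mk (.ofBijective f ⟨f_inj, f_surj⟩) fun g => LinearMap.ext fun x => ?_⟩⟩
  change s (α g x.1) + ρ g x.2 = ρ g (s x.1 + x.2)
  rw [map_add, s.isIntertwining]

theorem isCompl_toSubmodule_iff {p q : Subrepresentation ρ} :
    IsCompl p.toSubmodule q.toSubmodule ↔ IsCompl p q := by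
  simp only [isCompl_iff, disjoint_iff, codisjoint_iff, ← Subrepresentation.toSubmodule_inf,
    ← Subrepresentation.toSubmodule_sup]
  exact and_congr (Subrepresentation.toSubmodule_injective.eq_iff (b := ⊥))
    (Subrepresentation.toSubmodule_injective.eq_iff (b := ⊤))

theorem nonempty_prod_equiv_of_isCompl {p q : Subrepresentation ρ} (h : IsCompl p q) :
    Nonempty ((p.toRepresentation.prod q.toRepresentation).Equiv ρ) := by
  let e := Submodule.prodEquivOfIsCompl _ _ (isCompl_toSubmodule_iff.mpr h)
  refine ⟨.mk e fun g => LinearMap.ext fun x => ?_⟩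
  simp [e, Subrepresentation.toRepresentation]

theorem nonempty_prod_equiv_prod (e : α.Equiv ρ) (f : σ.Equiv τ) :
    Nonempty ((α.prod σ).Equiv (ρ.prod τ)) :=
  ⟨.mk (e.toLinearEquiv.prodCongr f.toLinearEquiv) fun g => LinearMap.ext fun x => by
    simp [e.isIntertwining, f.isIntertwining]⟩

theorem toLinearMap_pow (f : ρ.IntertwiningMap ρ) (n : ℕ) :
    (f ^ n).toLinearMap = f.toLinearMap ^ n := by
  induction n with
  | zero => rfl
  | succ n ih => rw [pow_succ, pow_succ, ← ih]; rfl

theorem nonempty_equiv_dual_comm [IsReflexive k V] {ρ : Representation k G V}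
    {σ : Representation k G W} (h : Nonempty (σ.Equiv ρ.dual)) : Nonempty (ρ.Equiv σ.dual) := by
  obtain ⟨e⟩ := h
  refine ⟨.mk (evalEquiv k V ≪≫ₗ e.toLinearEquiv.dualMap) fun g =>
    LinearMap.ext fun v => LinearMap.ext fun w => ?_⟩
  have h : e (σ g⁻¹ w) = ρ.dual g⁻¹ (e w) := e.toIntertwiningMap.isIntertwining _ _ g⁻¹ w
  change e w (ρ g v) = e (σ g⁻¹ w) v
  rw [h, dual_apply, inv_inv]
  rfl

end DirectSummand

section Indecomposable

open Representation

variable {k M A V W : Type*} [Field k] [Monoid M] [AddCommGroup A] [Module k A]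
  [AddCommGroup V] [Module k V] [AddCommGroup W] [Module k W]
  {α : Representation k M A} {σ : Representation k M V} {τ : Representation k M W}

/-- A nonzero representation which is not the internal direct sum of two nonzero
subrepresentations: a summand in a Krull–Schmidt decomposition. -/
def IsIndecomposableRep (α : Representation k M A) : Prop :=
  Nontrivial A ∧ ∀ p q : Subrepresentation α, IsCompl p q → p = ⊥ ∨ q = ⊥

theorem IsIndecomposableRep.isNilpotent_or_isUnit [FiniteDimensional k A]
    (hα : IsIndecomposableRep α) (f : α.IntertwiningMap α) :
    IsNilpotent f.toLinearMap ∨ IsUnit f.toLinearMap := by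
  obtain ⟨n, hn, hpos⟩ := (f.toLinearMap.eventually_isCompl_ker_pow_range_pow.and
    (Filter.eventually_gt_atTop 0)).exists
  rw [← toLinearMap_pow] at hn
  rcases hα.2 (f ^ n).ker (f ^ n).range (isCompl_toSubmodule_iff.mp hn) with hker | hrange
  · right
    have : LinearMap.ker (f.toLinearMap ^ n) = ⊥ := toLinearMap_pow f n ▸ congr(($hker).toSubmodule)
    exact (isUnit_pow_iff hpos.ne').mp ((LinearMap.isUnit_iff_ker_eq_bot _).mpr this)
  · left
    have : LinearMap.range (f.toLinearMap ^ n) = ⊥ :=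
      toLinearMap_pow f n ▸ congr(($hrange).toSubmodule)
    exact ⟨n, LinearMap.range_eq_bot.mp this⟩

theorem IsIndecomposableRep.bijective_or_bijective_of_add_eq_id [FiniteDimensional k A]
    (hα : IsIndecomposableRep α) {f g : α.IntertwiningMap α} (hfg : f + g = .id α) :
    Function.Bijective f ∨ Function.Bijective g := by
  rcases hα.isNilpotent_or_isUnit f with hf | hf
  · right
    have hg : g.toLinearMap = 1 - f.toLinearMap :=
      eq_sub_of_add_eq' congr(IntertwiningMap.toLinearMap $hfg)
    exact (Module.End.isUnit_iff _).mp (hg ▸ hf.isUnit_one_sub)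
  · exact .inl ((Module.End.isUnit_iff _).mp hf)

theorem IsIndecomposableRep.isDirectSummand_or_of_prod [FiniteDimensional k A]
    (hα : IsIndecomposableRep α) (h : IsDirectSummand α (σ.prod τ)) :
    IsDirectSummand α σ ∨ IsDirectSummand α τ := by
  obtain ⟨s, r, hrs⟩ := h
  let s₁ := (IntertwiningMap.fst k σ τ).comp s
  let s₂ := (IntertwiningMap.snd k σ τ).comp s
  let r₁ := r.comp (.inl k σ τ)
  let r₂ := r.comp (.inr k σ τ)
  have hsum : r₁.comp s₁ + r₂.comp s₂ = .id α := by
    rw [← hrs]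
    ext a
    change r ((s a).1, 0) + r (0, (s a).2) = r (s a)
    rw [← map_add, Prod.fst_add_snd]
  exact (hα.bijective_or_bijective_of_add_eq_id hsum).imp
    (isDirectSummand_of_bijective_comp s₁ r₁) (isDirectSummand_of_bijective_comp s₂ r₂)

end Indecomposable

section Determinant

variable {k M G A V W : Type*} [Field k] [Monoid M] [Group G] [AddCommGroup A] [Module k A]
  [AddCommGroup V] [Module k V] [AddCommGroup W] [Module k W]

theorem eq_det_smul_id_of_finrank_le_one [FiniteDimensional k V] (hV : finrank k V ≤ 1)
    (T : V →ₗ[k] V) : T = LinearMap.det T • LinearMap.id := by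
  rcases Nat.le_one_iff_eq_zero_or_eq_one.mp hV with h | h
  · have := finrank_zero_iff.mp h
    exact Subsingleton.elim _ _
  · obtain ⟨c, rfl, -⟩ := LinearMap.existsUnique_eq_smul_id_of_finrank_eq_one h T
    simp [LinearMap.det_smul, h]

theorem nonempty_equiv_of_finrank_le_one [FiniteDimensional k V] [FiniteDimensional k W]
    {ρ : Representation k M V} {σ : Representation k M W}
    (hV : finrank k V ≤ 1) (hVW : finrank k V = finrank k W)
    (hdet : ∀ g, LinearMap.det (ρ g) = LinearMap.det (σ g)) : Nonempty (ρ.Equiv σ) := by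
  refine ⟨.mk (LinearEquiv.ofFinrankEq V W hVW) fun g => ?_⟩
  rw [eq_det_smul_id_of_finrank_le_one hV (ρ g),
    eq_det_smul_id_of_finrank_le_one (hVW ▸ hV) (σ g), hdet g]
  ext v
  simp

theorem det_eq_of_representation_equiv {ρ : Representation k M V} {σ : Representation k M W}
    (e : ρ.Equiv σ) (g : M) : LinearMap.det (ρ g) = LinearMap.det (σ g) := by
  rw [← e.conj_apply_self, LinearEquiv.conj_apply, LinearMap.comp_assoc, LinearMap.det_conj]

theorem det_representation_ne_zero (ρ : Representation k G V) (g : G) : LinearMap.det (ρ g) ≠ 0 :=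
  ((Group.isUnit g).map (LinearMap.det.comp ρ)).ne_zero

theorem det_dual_representation [FiniteDimensional k V] (ρ : Representation k G V) (g : G) :
    LinearMap.det (ρ.dual g) = (LinearMap.det (ρ g))⁻¹ := by
  change LinearMap.det (ρ g⁻¹).dualMap = _
  rw [LinearMap.det_dualMap, ← mul_eq_one_iff_eq_inv₀ (det_representation_ne_zero ρ g), ← map_mul,
    ← map_mul, inv_mul_cancel, map_one, map_one]

-- The complements of `α` have dimension at most one, so they are determined by their determinant.
theorem IsDirectSummand.nonempty_equiv [FiniteDimensional k V] [FiniteDimensional k W]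
    {α : Representation k G A} {ρ : Representation k G V} {σ : Representation k G W}
    (hρ : IsDirectSummand α ρ) (hσ : IsDirectSummand α σ)
    (hVW : finrank k V = finrank k W) (hA : finrank k V ≤ finrank k A + 1)
    (hdet : ∀ g, LinearMap.det (ρ g) = LinearMap.det (σ g)) : Nonempty (ρ.Equiv σ) := by
  obtain ⟨c, ⟨e⟩⟩ := hρ.exists_prod_equiv
  obtain ⟨d, ⟨f⟩⟩ := hσ.exists_prod_equiv
  have : FiniteDimensional k A := .of_injective (e.toLinearEquiv.toLinearMap ∘ₗ .inl k A _)
    (e.toLinearEquiv.injective.comp LinearMap.inl_injective)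
  have hc : finrank k A + finrank k c.toSubmodule = finrank k V := by
    rw [← finrank_prod, e.toLinearEquiv.finrank_eq]
  have hd : finrank k A + finrank k d.toSubmodule = finrank k W := by
    rw [← finrank_prod, f.toLinearEquiv.finrank_eq]
  obtain ⟨h⟩ : Nonempty (c.toRepresentation.Equiv d.toRepresentation) := by
    refine nonempty_equiv_of_finrank_le_one (by lia) (by lia) fun g => ?_
    refine mul_left_cancel₀ (det_representation_ne_zero α g) ?_
    calc LinearMap.det (α g) * LinearMap.det (c.toRepresentation g)
      _ = LinearMap.det (ρ g) := by
        rw [← LinearMap.det_prodMap, ← det_eq_of_representation_equiv e]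
        rfl
      _ = LinearMap.det (α g) * LinearMap.det (d.toRepresentation g) := by
        rw [hdet, ← LinearMap.det_prodMap, ← det_eq_of_representation_equiv f]
        rfl
  obtain ⟨h⟩ := nonempty_prod_equiv_prod (.refl α) h
  exact ⟨e.symm.trans (h.trans f)⟩

end Determinant

section Weights

theorem card_fiber_eq_count_map_univ {ι γ : Type*} [Fintype ι] [DecidableEq γ] (f : ι → γ)
    (c : γ) : Nat.card {i // f i = c} = (Finset.univ.val.map f).count c := by
  rw [Nat.card_eq_fintype_card, Fintype.card_subtype, Multiset.count_map]
  simp only [Finset.card_def, Finset.filter_val, eq_comm]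

theorem exists_equiv_of_map_univ_eq {ι κ γ : Type*} [Fintype ι] [Fintype κ] {f : ι → γ}
    {g : κ → γ} (h : Finset.univ.val.map f = Finset.univ.val.map g) :
    ∃ e : ι ≃ κ, ∀ i, g (e i) = f i := by
  classical
  have hfiber (c : γ) : Nonempty ({i // f i = c} ≃ {j // g j = c}) := by
    rw [← Finite.card_eq, card_fiber_eq_count_map_univ, card_fiber_eq_count_map_univ, h]
  exact ⟨.ofFiberEquiv fun c => (hfiber c).some, Equiv.ofFiberEquiv_map _⟩

variable {k M G V W : Type*} [Field k] [Monoid M] [Group G]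
  [AddCommGroup V] [Module k V] [AddCommGroup W] [Module k W]

/-- `ρ` is simultaneously diagonalisable, with `m` the multiset of characters on its diagonal. -/
def HasWeights (ρ : Representation k M V) (m : Multiset (M →* kˣ)) : Prop :=
  ∃ (ι : Type) (_ : Fintype ι) (b : Basis ι k V) (χ : ι → M →* kˣ),
    Finset.univ.val.map χ = m ∧ ∀ g i, ρ g (b i) = (χ i g : k) • b i

/-- The simultaneous eigenvectors of `ρ` with eigenvalues given by the character `χ`. -/
def weightSpace (ρ : Representation k M V) (χ : M →* kˣ) : Submodule k V :=
  ⨅ g, End.eigenspace (ρ g) (χ g : k)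

variable {ρ : Representation k M V} {σ : Representation k M W} {m n : Multiset (M →* kˣ)}

theorem mem_weightSpace {χ : M →* kˣ} {v : V} :
    v ∈ weightSpace ρ χ ↔ ∀ g, ρ g v = (χ g : k) • v := by
  simp only [weightSpace, Submodule.mem_iInf, End.mem_eigenspace_iff]

theorem HasWeights.of_equiv (h : HasWeights ρ m) (e : ρ.Equiv σ) : HasWeights σ m := by
  obtain ⟨ι, _, b, χ, hm, hb⟩ := h
  refine ⟨ι, _, b.map e.toLinearEquiv, χ, hm, fun g i => ?_⟩
  calc σ g (e (b i))
    _ = e (ρ g (b i)) := (e.toIntertwiningMap.isIntertwining _ _ g _).symm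
    _ = (χ i g : k) • e (b i) := by rw [hb, map_smul]

theorem HasWeights.prod (hρ : HasWeights ρ m) (hσ : HasWeights σ n) :
    HasWeights (ρ.prod σ) (m + n) := by
  obtain ⟨ι, _, b, χ, rfl, hb⟩ := hρ
  obtain ⟨κ, _, c, ψ, rfl, hc⟩ := hσ
  refine ⟨ι ⊕ κ, inferInstance, b.prod c, Sum.elim χ ψ, ?_, ?_⟩
  · simp [← Finset.univ_disjSum_univ, Finset.val_disjSum, Multiset.disjSum]
  · rintro g (i | j) <;> ext <;> simp [hb, hc]

theorem HasWeights.dual {ρ : Representation k G V} {m : Multiset (G →* kˣ)}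
    (h : HasWeights ρ m) : HasWeights ρ.dual (m.map (·⁻¹)) := by
  classical
  obtain ⟨ι, _, b, χ, rfl, hb⟩ := h
  refine ⟨ι, _, b.dualBasis, fun i => (χ i)⁻¹, (Multiset.map_map _ _ _).symm, fun g i => ?_⟩
  refine b.ext fun j => ?_
  rcases eq_or_ne j i with rfl | hji <;> simp [Dual.transpose_apply, *]

theorem HasWeights.finrank_eq (h : HasWeights ρ m) : finrank k V = m.card := by
  obtain ⟨ι, _, b, χ, rfl, -⟩ := h
  simp [finrank_eq_card_basis b]

theorem HasWeights.det_eq (h : HasWeights ρ m) (g : M) : LinearMap.det (ρ g) = m.prod g := by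
  classical
  obtain ⟨ι, _, b, χ, rfl, hb⟩ := h
  have hdiag : LinearMap.toMatrix b b (ρ g) = Matrix.diagonal fun i => (χ i g : k) := by
    ext i j
    rcases eq_or_ne i j with rfl | hij
    · simp [LinearMap.toMatrix_apply, hb]
    · simp [LinearMap.toMatrix_apply, hb, hij]
  rw [← LinearMap.det_toMatrix b, hdiag, Matrix.det_diagonal, ← Units.coe_prod,
    ← MonoidHom.finsetProd_apply]
  rfl

-- A vector is a simultaneous eigenvector for `χ` iff it is supported on the `b i` of weight `χ`.
theorem HasWeights.finrank_weightSpace [DecidableEq (M →* kˣ)] (h : HasWeights ρ m)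
    (χ : M →* kˣ) : finrank k (weightSpace ρ χ) = m.count χ := by
  obtain ⟨ι, _, b, ψ, rfl, hb⟩ := h
  have hspan : weightSpace ρ χ = Submodule.span k (b '' {i | ψ i = χ}) := by
    refine le_antisymm (fun v hv => b.mem_span_image.mpr fun i hi => ?_)
      (Submodule.span_le.mpr ?_)
    · refine MonoidHom.ext fun g => Units.ext ?_
      have hrepr : b.repr (ρ g v) i = ψ i g * b.repr v i := by
        have hcoord : b.coord i ∘ₗ ρ g = (ψ i g : k) • b.coord i := b.ext fun j => by
          rcases eq_or_ne j i with rfl | hji <;> simp [*]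
        exact congr($hcoord v)
      rw [mem_weightSpace.mp hv, map_smul] at hrepr
      exact (mul_right_cancel₀ (Finsupp.mem_support_iff.mp hi) hrepr).symm
    · rintro - ⟨i, rfl, rfl⟩
      exact mem_weightSpace.mpr fun g => hb g i
  have hli : LinearIndependent k fun i : {i // ψ i = χ} => b i :=
    b.linearIndependent.comp _ Subtype.val_injective
  rw [hspan, Set.image_eq_range, ← card_fiber_eq_count_map_univ, Nat.card_eq_fintype_card]
  exact finrank_span_eq_card hli

theorem HasWeights.unique (hm : HasWeights ρ m) (hn : HasWeights ρ n) : m = n := by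
  classical
  exact Multiset.ext.mpr fun χ => by rw [← hm.finrank_weightSpace, hn.finrank_weightSpace]

theorem HasWeights.nonempty_equiv (hρ : HasWeights ρ m) (hσ : HasWeights σ m) :
    Nonempty (ρ.Equiv σ) := by
  obtain ⟨ι, _, b, χ, rfl, hb⟩ := hρ
  obtain ⟨κ, _, c, ψ, hψ, hc⟩ := hσ
  obtain ⟨e, he⟩ := exists_equiv_of_map_univ_eq hψ.symm
  refine ⟨.mk (b.equiv c e) fun g => b.ext fun i => ?_⟩
  simp [hb, hc, he]

theorem hasWeights_singleton_of_finrank_eq_one {ρ : Representation k G V}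
    (hV : finrank k V = 1) : HasWeights ρ {(LinearMap.det.comp ρ).toHomUnits} := by
  have : FiniteDimensional k V := .of_finrank_eq_succ hV
  refine ⟨Unit, _, basisUnique Unit hV, fun _ => (LinearMap.det.comp ρ).toHomUnits, rfl,
    fun g i => ?_⟩
  exact congr($(eq_det_smul_id_of_finrank_le_one hV.le (ρ g)) (basisUnique Unit hV i))

theorem hasWeights_trivial : HasWeights (Representation.trivial k M k) {1} :=
  ⟨Unit, _, Basis.singleton Unit k, 1, rfl, by simp⟩

theorem hasWeights_zero_of_subsingleton [Subsingleton V] : HasWeights ρ 0 :=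
  ⟨Empty, _, Basis.empty V, Empty.elim, rfl, fun _ i => i.elim⟩

end Weights

theorem exists_indecomposable_summand_or_hasWeights.{u} {k G : Type*} [Field k] [Group G]
    {V : Type u} [AddCommGroup V] [Module k V] [FiniteDimensional k V]
    (ρ : Representation k G V) :
    (∃ (A : Type u) (_ : AddCommGroup A) (_ : Module k A) (α : Representation k G A),
      IsIndecomposableRep α ∧ 1 < finrank k A ∧ IsDirectSummand α ρ) ∨ ∃ m, HasWeights ρ m := by
  induction hd : finrank k V using Nat.strong_induction_on generalizing V with | _ d ih
  subst hd
  rcases subsingleton_or_nontrivial V with hV | hV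
  · exact .inr ⟨0, hasWeights_zero_of_subsingleton⟩
  by_cases hρ : IsIndecomposableRep ρ
  · rcases (Nat.succ_le_iff.mpr (finrank_pos : 0 < finrank k V)).eq_or_lt with hone | hlt
    · exact .inr ⟨_, hasWeights_singleton_of_finrank_eq_one hone.symm⟩
    · exact .inl ⟨V, _, _, ρ, hρ, hlt, isDirectSummand_of_equiv (.refl ρ)⟩
  obtain ⟨p, q, hpq, hp, hq⟩ : ∃ p q : Subrepresentation ρ, IsCompl p q ∧ p ≠ ⊥ ∧ q ≠ ⊥ := by
    simpa [IsIndecomposableRep, hV] using hρ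
  have hdim := Submodule.finrank_add_eq_of_isCompl (isCompl_toSubmodule_iff.mpr hpq)
  have finrank_pos_of_ne_bot {r : Subrepresentation ρ} (hr : r ≠ ⊥) :
      0 < finrank k r.toSubmodule :=
    Submodule.one_le_finrank_iff.mpr fun h => hr (Subrepresentation.toSubmodule_injective h)
  have hp := finrank_pos_of_ne_bot hp
  have hq := finrank_pos_of_ne_bot hq
  obtain ⟨e⟩ := nonempty_prod_equiv_of_isCompl hpq
  have he := isDirectSummand_of_equiv e
  rcases ih _ (by lia) p.toRepresentation rfl with ⟨A, _, _, α, hα, hA, hαp⟩ | ⟨m, hm⟩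
  · exact .inl ⟨A, _, _, α, hα, hA, hαp.trans (isDirectSummand_prod_left.trans he)⟩
  rcases ih _ (by lia) q.toRepresentation rfl with ⟨A, _, _, α, hα, hA, hαq⟩ | ⟨n, hn⟩
  · exact .inl ⟨A, _, _, α, hα, hA, hαq.trans (isDirectSummand_prod_right.trans he)⟩
  exact .inr ⟨m + n, (hm.prod hn).of_equiv e⟩

section InverseMultisets

variable {Γ : Type*} [CommGroup Γ]

theorem map_inv_map_inv (s : Multiset Γ) : (s.map (·⁻¹)).map (·⁻¹) = s := by
  simp

theorem eq_or_map_inv_eq_of_card_eq_two {s t : Multiset Γ} (hs : s.card = 2) (ht : t.card = 2)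
    (hprod : s.prod = t.prod) (hinv : s + s.map (·⁻¹) = t + t.map (·⁻¹)) :
    s = t ∨ s.map (·⁻¹) = t := by
  obtain ⟨y, z, rfl⟩ := Multiset.card_eq_two.mp ht
  have hy : y ∈ s + s.map (·⁻¹) := hinv ▸ by simp
  rcases Multiset.mem_add.mp hy with hy | hy
  · obtain ⟨s, rfl⟩ := Multiset.exists_cons_of_mem hy
    obtain ⟨c, rfl⟩ := Multiset.card_eq_one.mp (by simpa using hs)
    obtain rfl : c = z := by simpa using hprod
    exact .inl rfl
  · obtain ⟨x, hx, rfl⟩ := Multiset.mem_map.mp hy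
    obtain ⟨s, rfl⟩ := Multiset.exists_cons_of_mem hx
    obtain ⟨c, rfl⟩ := Multiset.card_eq_one.mp (by simpa using hs)
    have hcz : ({c} + {c⁻¹} : Multiset Γ) = {z} + {z⁻¹} := by
      simp only [← Multiset.singleton_add, Multiset.insert_eq_cons, Multiset.map_add,
        Multiset.map_singleton, inv_inv] at hinv
      refine add_left_cancel (a := {x} + {x⁻¹}) (Eq.trans ?_ (hinv.trans ?_)) <;> abel
    have hz : z ∈ ({c} + {c⁻¹} : Multiset Γ) := hcz ▸ by simp
    obtain rfl | rfl : z = c ∨ z = c⁻¹ := by simpa using hz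
    · obtain hx : x = x⁻¹ := by simpa using hprod
      exact .inl (congr($hx ::ₘ {z}))
    · exact .inr (by simp)

theorem eq_or_map_inv_eq_of_mem {s t : Multiset Γ} {x : Γ} (hxs : x ∈ s) (hxt : x ∈ t)
    (hs : s.card = 3) (ht : t.card = 3) (hs₁ : s.prod = 1) (ht₁ : t.prod = 1)
    (hinv : s + s.map (·⁻¹) = t + t.map (·⁻¹)) : s = t ∨ s.map (·⁻¹) = t := by
  obtain ⟨s, rfl⟩ := Multiset.exists_cons_of_mem hxs
  obtain ⟨t, rfl⟩ := Multiset.exists_cons_of_mem hxt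
  have hs' : s.prod = x⁻¹ := eq_inv_of_mul_eq_one_right (by simpa using hs₁)
  have ht' : t.prod = x⁻¹ := eq_inv_of_mul_eq_one_right (by simpa using ht₁)
  have hinv' : s + s.map (·⁻¹) = t + t.map (·⁻¹) := by simpa using hinv
  refine (eq_or_map_inv_eq_of_card_eq_two (by simpa using hs) (by simpa using ht)
    (hs'.trans ht'.symm) hinv').imp (congrArg (x ::ₘ ·)) ?_
  rintro rfl
  obtain hx : x = x⁻¹ := by simpa [Multiset.prod_map_inv', hs'] using ht'
  rw [Multiset.map_cons, ← hx]

theorem eq_or_map_inv_eq_of_card_eq_three {s t : Multiset Γ} (hs : s.card = 3) (ht : t.card = 3)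
    (hs₁ : s.prod = 1) (ht₁ : t.prod = 1) (hinv : s + s.map (·⁻¹) = t + t.map (·⁻¹)) :
    s = t ∨ s.map (·⁻¹) = t := by
  obtain ⟨x, hxt⟩ := Multiset.card_pos_iff_exists_mem.mp (ht ▸ three_pos)
  have hx : x ∈ s + s.map (·⁻¹) := hinv ▸ Multiset.mem_add.mpr (.inl hxt)
  rcases Multiset.mem_add.mp hx with hxs | hxs
  · exact eq_or_map_inv_eq_of_mem hxs hxt hs ht hs₁ ht₁ hinv
  · have h := eq_or_map_inv_eq_of_mem hxs hxt (by simpa using hs) ht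
      (by rw [Multiset.prod_map_inv', hs₁, inv_one]) ht₁
      (by rw [map_inv_map_inv, add_comm, hinv])
    rw [map_inv_map_inv] at h
    exact h.symm

end InverseMultisets

section Main

open Representation

variable {k G A V W : Type*} [Field k] [Group G] [AddCommGroup A] [Module k A]
  [AddCommGroup V] [Module k V] [AddCommGroup W] [Module k W]
  {ρ : Representation k G V} {σ : Representation k G W}

theorem IsIndecomposableRep.nonempty_equiv_or_dual [FiniteDimensional k V]
    [FiniteDimensional k W] {α : Representation k G A}
    (hα : IsIndecomposableRep α) (hA : 1 < finrank k A) (hVA : finrank k V ≤ finrank k A + 1)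
    (hVW : finrank k V = finrank k W)
    (hρ : ∀ g, LinearMap.det (ρ g) = 1) (hσ : ∀ g, LinearMap.det (σ g) = 1)
    (hαρ : IsDirectSummand α ρ) (hασ : IsDirectSummand α (σ.prod (σ.dual.prod (trivial k G k)))) :
    Nonempty (ρ.Equiv σ) ∨ Nonempty (ρ.Equiv σ.dual) := by
  have : FiniteDimensional k A := .of_finrank_pos (zero_lt_one.trans hA)
  rcases hα.isDirectSummand_or_of_prod hασ with hασ | hασ
  · exact .inl (hαρ.nonempty_equiv hασ hVW hVA fun g => by rw [hρ, hσ])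
  rcases hα.isDirectSummand_or_of_prod hασ with hασ | hασ
  · exact .inr (hαρ.nonempty_equiv hασ (hVW.trans Subspace.dual_finrank_eq.symm) hVA fun g => by
      rw [hρ, det_dual_representation, hσ, inv_one])
  · exact absurd hασ.finrank_le (by simpa using hA)

theorem HasWeights.nonempty_equiv_or_dual {m n : Multiset (G →* kˣ)}
    (hm : HasWeights ρ m) (hn : HasWeights σ n) (hV : finrank k V = 3) (hW : finrank k W = 3)
    (hρ : ∀ g, LinearMap.det (ρ g) = 1) (hσ : ∀ g, LinearMap.det (σ g) = 1)
    (e : (ρ.prod (ρ.dual.prod (trivial k G k))).Equiv (σ.prod (σ.dual.prod (trivial k G k)))) :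
    Nonempty (ρ.Equiv σ) ∨ Nonempty (ρ.Equiv σ.dual) := by
  have hmn : m + m.map (·⁻¹) = n + n.map (·⁻¹) := by
    have h := ((hm.prod (hm.dual.prod hasWeights_trivial)).of_equiv e).unique
      (hn.prod (hn.dual.prod hasWeights_trivial))
    simpa only [← add_assoc, add_left_inj] using h
  have hm₁ : m.prod = 1 := MonoidHom.ext fun g => Units.ext ((hm.det_eq g).symm.trans (hρ g))
  have hn₁ : n.prod = 1 := MonoidHom.ext fun g => Units.ext ((hn.det_eq g).symm.trans (hσ g))
  rcases eq_or_map_inv_eq_of_card_eq_three (hm.finrank_eq ▸ hV) (hn.finrank_eq ▸ hW) hm₁ hn₁ hmn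
    with rfl | rfl
  · exact .inl (hm.nonempty_equiv hn)
  · have hm' := map_inv_map_inv m ▸ hn.dual
    exact .inr (hm.nonempty_equiv hm')

theorem repIso_or_repIso_dual_of_repSum7_iso_general
    (hV : finrank k V = 3) (hW : finrank k W = 3)
    (ρ : Representation k G V) (σ : Representation k G W)
    (hρ : ∀ g, LinearMap.det (ρ g) = 1) (hσ : ∀ g, LinearMap.det (σ g) = 1)
    (h : Nonempty ((ρ.prod (ρ.dual.prod (trivial k G k))).Equiv
      (σ.prod (σ.dual.prod (trivial k G k))))) :
    Nonempty (ρ.Equiv σ) ∨ Nonempty (ρ.Equiv σ.dual) := by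
  have : FiniteDimensional k V := .of_finrank_eq_succ hV
  have : FiniteDimensional k W := .of_finrank_eq_succ hW
  obtain ⟨e⟩ := h
  rcases exists_indecomposable_summand_or_hasWeights ρ with ⟨A, _, _, α, hα, hA, hαρ⟩ | ⟨m, hm⟩
  · exact hα.nonempty_equiv_or_dual hA (by lia) (hV.trans hW.symm) hρ hσ hαρ
      (hαρ.trans (isDirectSummand_prod_left.trans (isDirectSummand_of_equiv e)))
  rcases exists_indecomposable_summand_or_hasWeights σ with ⟨A, _, _, α, hα, hA, hασ⟩ | ⟨n, hn⟩
  · refine (hα.nonempty_equiv_or_dual hA (by lia) (hW.trans hV.symm) hσ hρ hασ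
      (hασ.trans (isDirectSummand_prod_left.trans (isDirectSummand_of_equiv e.symm)))).imp
      (fun ⟨f⟩ => ⟨f.symm⟩) nonempty_equiv_dual_comm
  exact hm.nonempty_equiv_or_dual hn hV hW hρ hσ e

theorem repIso_iff_nonempty_equiv {V W : Type*} [AddCommGroup V] [Module ℂ V] [AddCommGroup W]
    [Module ℂ W] {ρ : Representation ℂ G V} {σ : Representation ℂ G W} :
    RepIso ρ σ ↔ Nonempty (ρ.Equiv σ) :=
  ⟨fun ⟨e, he⟩ => ⟨.mk e fun g => LinearMap.ext (he g)⟩,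
    fun ⟨e⟩ => ⟨e.toLinearEquiv, e.toIntertwiningMap.isIntertwining _ _⟩⟩

end Main

/-- **Lemma 2.2(i), representation-theoretic content.**
If `ρ₁` and `ρ₂` are semisimple `3`-dimensional complex representations of a group `G`, both
with trivial determinant, and the `7`-dimensional representations `ρ₁ ⊕ ρ₁* ⊕ 1` and
`ρ₂ ⊕ ρ₂* ⊕ 1` are isomorphic, then `ρ₁ ≅ ρ₂` or `ρ₁ ≅ ρ₂*`. -/
theorem repIso_or_repIso_dual_of_repSum7_iso {G : Type*} [Group G]
    {V₁ V₂ : Type*} [AddCommGroup V₁] [Module ℂ V₁] [AddCommGroup V₂] [Module ℂ V₂]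
    [FiniteDimensional ℂ V₁] [FiniteDimensional ℂ V₂]
    (hdim₁ : Module.finrank ℂ V₁ = 3) (hdim₂ : Module.finrank ℂ V₂ = 3)
    (ρ₁ : Representation ℂ G V₁) (ρ₂ : Representation ℂ G V₂)
    (hss₁ : IsSemisimpleRep ρ₁) (hss₂ : IsSemisimpleRep ρ₂)
    (hdet₁ : ∀ g : G, LinearMap.det (ρ₁ g) = 1)
    (hdet₂ : ∀ g : G, LinearMap.det (ρ₂ g) = 1)
    (hiso : RepIso (repSum7 ρ₁) (repSum7 ρ₂)) :
    RepIso ρ₁ ρ₂ ∨ RepIso ρ₁ ρ₂.dual := by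
  simp only [repIso_iff_nonempty_equiv] at hiso ⊢
  exact repIso_or_repIso_dual_of_repSum7_iso_general hdim₁ hdim₂ ρ₁ ρ₂ hdet₁ hdet₂ hiso
end

section
/- Let G be a locally compact Hausdorff, second-countable topological group. Let (πₙ, Hₙ), for n ∈ ℕ, be irreducible unitary representations of G and let (σ, H) be an irreducible unitary representation of G. Assume σ is weakly contained in the Hilbert direct sum of the πₙ, in the following sense: for every unit vector u ∈ H, every compact subset C ⊆ G and every ε > 0, there exist finitely many indices n₁, …, n_m, unit vectors wⱼ ∈ H_{nⱼ}, and nonnegative reals t₁, …, t_m with t₁ + ⋯ + t_m = 1, such that |⟪σ(g)u, u⟫ − Σⱼ tⱼ·⟪π_{nⱼ}(g)wⱼ, wⱼ⟫| < ε for all g ∈ C. Then σ is a limit of a subsequence of (πₙ): for every unit vector u ∈ H there exist a sequence of indices (n_k) and unit vectors v_k ∈ H_{n_k} such that the functions g ↦ ⟪π_{n_k}(g)v_k, v_k⟫ converge to g ↦ ⟪σ(g)u, u⟫ uniformly on every compact subset of G. -/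
open Filter Topology

/-!
A normalized matrix coefficient `φ` of an irreducible representation is a pure function of positive
type: if `φ = α + β` with `α`, `β` of positive type, then `α` is given by a self-adjoint operator
commuting with the representation, which is a scalar by Schur's lemma.

Let `χₖ = ∑ⱼ tₖⱼ ψₖⱼ` be convex combinations of normalized functions of positive type converging
to `φ`. For every choice of `rₖⱼ ∈ [0, 1]`, the parts of `χₖ` with weights `tₖⱼ rₖⱼ` and
`tₖⱼ (1 - rₖⱼ)` are of positive type and pointwise bounded, so by purity each of their limit points
is a multiple of `φ`. Suitable choices of `rₖⱼ` give `∑ⱼ tₖⱼ |ψₖⱼ(g) - φ(g)| → 0` for every `g`;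
integrating over a compact set `K`, some `ψₖⱼ` is as close to `φ` in `L¹(K)` as desired. Finally,
averaging over the translates of a small neighbourhood of `1`, on which functions of positive type
near `φ` are almost invariant, upgrades `L¹`-closeness to uniform closeness on compact sets
(Raikov).
-/

section Gram

open scoped ComplexOrder InnerProductSpace

variable {𝕜 : Type*} [RCLike 𝕜] {X : Type*}
  {E : Type*} [NormedAddCommGroup E] [InnerProductSpace 𝕜 E]

lemma inner_linearCombination (w : X → E) (c d : X →₀ 𝕜) :
    ⟪Finsupp.linearCombination 𝕜 w c, Finsupp.linearCombination 𝕜 w d⟫_𝕜 =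
      c.sum fun x a => d.sum fun y b => star a * Matrix.gram 𝕜 w x y * b := by
  simp only [Finsupp.linearCombination_apply, Finsupp.sum, sum_inner, inner_sum,
    inner_smul_left, inner_smul_right, Finset.mul_sum, Matrix.gram_apply]
  rw [Finset.sum_comm]
  refine Finset.sum_congr rfl fun x _ => Finset.sum_congr rfl fun y _ => ?_
  rw [RCLike.star_def]
  ring

lemma posSemidef_gram (w : X → E) : (Matrix.gram 𝕜 w).PosSemidef := by
  refine ⟨Matrix.isHermitian_gram 𝕜 w, fun c => ?_⟩
  rw [← inner_linearCombination, inner_self_eq_norm_sq_to_K]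
  norm_cast
  positivity

universe u v

theorem exists_gram_eq_of_posSemidef {𝕜 : Type u} [RCLike 𝕜] {X : Type v} {K : Matrix X X 𝕜}
    (hK : K.PosSemidef) :
    ∃ (F : Type (max u v)) (_ : NormedAddCommGroup F) (_ : InnerProductSpace 𝕜 F)
      (_ : CompleteSpace F) (k : X → F), Matrix.gram 𝕜 k = K := by
  let core : PreInnerProductSpace.Core 𝕜 (X →₀ 𝕜) :=
    { inner c d := c.sum fun x a => d.sum fun y b => star a * K x y * b
      conj_inner_symm c d := by
        simp only [Finsupp.sum, map_sum, map_mul, RCLike.star_def, RCLike.conj_conj]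
        rw [Finset.sum_comm]
        refine Finset.sum_congr rfl fun x _ => Finset.sum_congr rfl fun y _ => ?_
        rw [← RCLike.star_def, hK.1.apply]
        ring
      re_inner_nonneg c := (RCLike.nonneg_iff.1 (hK.2 c)).1
      add_left c c' d := by
        classical
        exact Finsupp.sum_add_index' (by simp) fun x a a' => by
          simp only [star_add, add_mul, Finsupp.sum_add]
      smul_left c d r := by
        rw [Finsupp.sum_smul_index (by simp), Finsupp.mul_sum]
        simp only [Finsupp.mul_sum, star_mul', RCLike.star_def, mul_assoc] }
  let : SeminormedAddCommGroup (X →₀ 𝕜) :=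
    InnerProductSpace.Core.toSeminormedAddCommGroup (𝕜 := 𝕜)
  let : InnerProductSpace 𝕜 (X →₀ 𝕜) := .ofCore core
  refine ⟨UniformSpace.Completion (X →₀ 𝕜), inferInstance, inferInstance, inferInstance,
    fun x => (Finsupp.single x 1 : X →₀ 𝕜), ?_⟩
  ext x y
  rw [Matrix.gram_apply, UniformSpace.Completion.inner_coe]
  exact (Finsupp.sum_single_index (by simp)).trans <|
    (Finsupp.sum_single_index (by simp)).trans (by simp)

lemma norm_linearCombination_le {F : Type*} [NormedAddCommGroup F] [InnerProductSpace 𝕜 F]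
    {w : X → E} {k : X → F}
    (h : (Matrix.gram 𝕜 w - Matrix.gram 𝕜 k).PosSemidef) (c : X →₀ 𝕜) :
    ‖Finsupp.linearCombination 𝕜 k c‖ ≤ ‖Finsupp.linearCombination 𝕜 w c‖ := by
  have hc := h.2 c
  simp only [Matrix.sub_apply, mul_sub, sub_mul, Finsupp.sum_sub,
    ← inner_linearCombination, inner_self_eq_norm_sq_to_K] at hc
  rw [sub_nonneg] at hc
  norm_cast at hc
  exact le_of_sq_le_sq hc (norm_nonneg _)

-- Radon–Nikodym for kernels: `w x ↦ k x` extends to a contraction `S`, and `T = S† S`.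
theorem exists_isSelfAdjoint_inner_eq [CompleteSpace E] {w : X → E}
    (hw : Dense (Submodule.span 𝕜 (Set.range w) : Set E)) {K : Matrix X X 𝕜} (hK : K.PosSemidef)
    (hKw : (Matrix.gram 𝕜 w - K).PosSemidef) :
    ∃ T : E →L[𝕜] E, IsSelfAdjoint T ∧ ∀ x y, ⟪T (w x), w y⟫_𝕜 = K x y := by
  obtain ⟨F, _, _, _, k, rfl⟩ := exists_gram_eq_of_posSemidef hK
  rw [← Finsupp.range_linearCombination, LinearMap.coe_range] at hw
  let S : E →L[𝕜] F :=
    (Finsupp.linearCombination 𝕜 k).extendOfNorm (Finsupp.linearCombination 𝕜 w)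
  have hS (x : X) : S (w x) = k x := by
    have := LinearMap.extendOfNorm_eq hw
      ⟨1, fun c => by simpa using norm_linearCombination_le hKw c⟩ (Finsupp.single x 1)
    simpa only [Finsupp.linearCombination_single, one_smul] using this
  refine ⟨S.adjoint ∘L S, S.isPositive_adjoint_comp_self.isSelfAdjoint, fun x y => ?_⟩
  rw [ContinuousLinearMap.comp_apply, ContinuousLinearMap.adjoint_inner_left, hS, hS,
    Matrix.gram_apply]

lemma continuousLinearMap_ext_inner {w : X → E}
    (hw : Dense (Submodule.span 𝕜 (Set.range w) : Set E)) {A B : E →L[𝕜] E}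
    (h : ∀ x y, ⟪A (w x), w y⟫_𝕜 = ⟪B (w x), w y⟫_𝕜) : A = B := by
  refine ContinuousLinearMap.ext_on hw (Set.eqOn_range.2 (funext fun x => ?_))
  exact (innerSL_inj (𝕜 := 𝕜)).1 (ContinuousLinearMap.ext_on hw (Set.eqOn_range.2 (funext (h x))))

end Gram

section PositiveType

open scoped ComplexOrder InnerProductSpace

universe u

variable {G : Type u} [Group G]

/-- The kernel `(g, h) ↦ φ (h⁻¹ * g)` of a function `φ` on a group. The order of the factors makes
the Gram matrix of an orbit of a unitary representation the kernel of its matrix coefficient. -/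
def groupKernel (φ : G → ℂ) : Matrix G G ℂ :=
  .of fun g h => φ (h⁻¹ * g)

/-- A function of positive type on a group: its translation-invariant kernel is positive
semidefinite. -/
def IsPositiveType (φ : G → ℂ) : Prop :=
  (groupKernel φ).PosSemidef

/-- A function of positive type is pure if it spans an extremal ray of the cone of all functions
of positive type. -/
structure IsPure (φ : G → ℂ) : Prop where
  isPositiveType : IsPositiveType φ
  exists_eq_smul : ∀ α β : G → ℂ, IsPositiveType α → IsPositiveType β → α + β = φ →
    ∃ c : ℂ, α = c • φ

lemma groupKernel_sum_smul {ι : Type*} (s : Finset ι) (t : ι → ℝ) (φ : ι → G → ℂ) :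
    groupKernel (∑ i ∈ s, t i • φ i) = ∑ i ∈ s, t i • groupKernel (φ i) := by
  ext g h
  simp [groupKernel, Matrix.sum_apply]

lemma isClosed_setOf_isPositiveType : IsClosed {φ : G → ℂ | IsPositiveType φ} := by
  simp only [IsPositiveType, Matrix.PosSemidef, Matrix.IsHermitian.ext_iff, groupKernel,
    Matrix.of_apply, Finsupp.sum, Set.ofPred_and, Set.ofPred_forall]
  refine .inter (isClosed_iInter fun g => isClosed_iInter fun h => isClosed_eq ?_ ?_)
    (isClosed_iInter fun c => isClosed_le ?_ ?_) <;> fun_prop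

namespace IsPositiveType

variable {φ : G → ℂ}

lemma sum_smul {ι : Type*} {s : Finset ι} {t : ι → ℝ} {φ : ι → G → ℂ}
    (ht : ∀ i ∈ s, 0 ≤ t i) (hφ : ∀ i ∈ s, IsPositiveType (φ i)) :
    IsPositiveType (∑ i ∈ s, t i • φ i) := by
  rw [IsPositiveType, groupKernel_sum_smul]
  exact Matrix.posSemidef_sum s fun i hi => (hφ i hi).smul (ht i hi)

lemma apply_one_nonneg (hφ : IsPositiveType φ) : 0 ≤ φ 1 := by
  simpa [groupKernel] using hφ.diag_nonneg (i := 1)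

lemma exists_inner_eq (hφ : IsPositiveType φ) :
    ∃ (F : Type u) (_ : NormedAddCommGroup F) (_ : InnerProductSpace ℂ F) (k : G → F),
      (∀ g h, ⟪k g, k h⟫_ℂ = φ (h⁻¹ * g)) ∧ ∀ g, ‖k g‖ ^ 2 = (φ 1).re := by
  obtain ⟨F, _, _, _, k, hk⟩ := exists_gram_eq_of_posSemidef hφ
  have hinner (g h : G) : ⟪k g, k h⟫_ℂ = φ (h⁻¹ * g) := congr_fun₂ hk g h
  refine ⟨F, _, _, k, hinner, fun g => ?_⟩
  rw [← inner_self_eq_norm_sq (𝕜 := ℂ), hinner, inv_mul_cancel, RCLike.re_eq_complex_re]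

lemma norm_apply_le (hφ : IsPositiveType φ) (g : G) : ‖φ g‖ ≤ (φ 1).re := by
  obtain ⟨F, _, _, k, hinner, hnorm⟩ := hφ.exists_inner_eq
  calc ‖φ g‖ = ‖⟪k g, k 1⟫_ℂ‖ := by rw [hinner, inv_one, one_mul]
    _ ≤ ‖k g‖ * ‖k 1‖ := norm_inner_le_norm _ _
    _ ≤ (φ 1).re := by nlinarith [hnorm g, hnorm 1, sq_nonneg (‖k g‖ - ‖k 1‖)]

lemma norm_sub_sq_le (hφ : IsPositiveType φ) (g h : G) :
    ‖φ g - φ h‖ ^ 2 ≤ 2 * (φ 1).re * ((φ 1).re - (φ (h⁻¹ * g)).re) := by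
  obtain ⟨F, _, _, k, hinner, hnorm⟩ := hφ.exists_inner_eq
  calc ‖φ g - φ h‖ ^ 2 = ‖⟪k g - k h, k 1⟫_ℂ‖ ^ 2 := by
        rw [inner_sub_left, hinner, hinner, inv_one, one_mul, one_mul]
    _ ≤ (‖k g - k h‖ * ‖k 1‖) ^ 2 := by gcongr; exact norm_inner_le_norm _ _
    _ = (‖k g‖ ^ 2 - 2 * (φ (h⁻¹ * g)).re + ‖k h‖ ^ 2) * ‖k 1‖ ^ 2 := by
        rw [mul_pow, norm_sub_sq (𝕜 := ℂ), hinner, RCLike.re_eq_complex_re]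
    _ = 2 * (φ 1).re * ((φ 1).re - (φ (h⁻¹ * g)).re) := by
        rw [hnorm, hnorm, hnorm]
        ring

end IsPositiveType

end PositiveType

theorem exists_eq_algebraMap_of_cfc_mul_eq_zero {A : Type*} [CStarAlgebra A] [Nontrivial A] {a : A}
    (ha : IsSelfAdjoint a)
    (h : ∀ f g : ℝ → ℝ, cfc f a * cfc g a = 0 → cfc f a = 0 ∨ cfc g a = 0) :
    ∃ r : ℝ, a = algebraMap ℝ A r := by
  have eq_zero_of_cfc {f : ℝ → ℝ} (hf : Continuous f) (h0 : cfc f a = 0) {x : ℝ}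
      (hx : x ∈ spectrum ℝ a) : f x = 0 := by
    have hfx := Set.mem_image_of_mem f hx
    rwa [← cfc_map_spectrum f a ha hf.continuousOn, h0, spectrum.zero_eq] at hfx
  -- Two points of the spectrum could be separated by functions whose product vanishes.
  have spectrum_le {x y : ℝ} (hx : x ∈ spectrum ℝ a) (hy : y ∈ spectrum ℝ a) : x ≤ y := by
    by_contra! hyx
    let m := (x + y) / 2
    have hmul : cfc (fun z => max (z - m) 0) a * cfc (fun z => max (m - z) 0) a = 0 := by
      rw [← cfc_mul _ _ a, ← cfc_const_zero ℝ a]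
      exact cfc_congr fun z _ => by grind
    rcases h _ _ hmul with h0 | h0
    · have := eq_zero_of_cfc (by fun_prop) h0 hx
      grind
    · have := eq_zero_of_cfc (by fun_prop) h0 hy
      grind
  obtain ⟨r, hr⟩ := ContinuousFunctionalCalculus.spectrum_nonempty (R := ℝ) a ha
  refine ⟨r, ?_⟩
  calc a = cfc (fun x => x) a := (cfc_id' ℝ a ha).symm
    _ = cfc (fun _ => r) a := cfc_congr fun x hx => (spectrum_le hx hr).antisymm (spectrum_le hr hx)
    _ = algebraMap ℝ A r := cfc_const r a ha

section Representation

open scoped ComplexOrder InnerProductSpace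

variable {G : Type*} [Group G] {E : Type*} [NormedAddCommGroup E] [InnerProductSpace ℂ E]
  {ρ : G →* (E ≃ₗᵢ[ℂ] E)}

/-- The diagonal matrix coefficient of a unitary representation at the vector `v`. -/
noncomputable def matrixCoeff (ρ : G →* (E ≃ₗᵢ[ℂ] E)) (v : E) (g : G) : ℂ :=
  ⟪ρ g v, v⟫_ℂ

lemma matrixCoeff_one (ρ : G →* (E ≃ₗᵢ[ℂ] E)) {v : E} (hv : ‖v‖ = 1) :
    matrixCoeff ρ v 1 = 1 := by
  simp [matrixCoeff, inner_self_eq_norm_sq_to_K, hv]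

lemma continuous_matrixCoeff [TopologicalSpace G] {v : E} (hρ : Continuous fun g => ρ g v) :
    Continuous (matrixCoeff ρ v) :=
  hρ.inner continuous_const

lemma gram_orbit (ρ : G →* (E ≃ₗᵢ[ℂ] E)) (v : E) :
    Matrix.gram ℂ (fun g => ρ g v) = groupKernel (matrixCoeff ρ v) := by
  ext g h
  calc ⟪ρ g v, ρ h v⟫_ℂ = ⟪ρ h (ρ (h⁻¹ * g) v), ρ h v⟫_ℂ := by simp
    _ = matrixCoeff ρ v (h⁻¹ * g) := (ρ h).inner_map_map _ _

lemma isPositiveType_matrixCoeff (ρ : G →* (E ≃ₗᵢ[ℂ] E)) (v : E) :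
    IsPositiveType (matrixCoeff ρ v) := by
  rw [IsPositiveType, ← gram_orbit]
  exact posSemidef_gram _

/-- Topological irreducibility of a unitary representation: the space is nonzero and has no proper
nonzero closed invariant subspace. -/
def IsTopIrreducible (ρ : G →* (E ≃ₗᵢ[ℂ] E)) : Prop :=
  Nontrivial E ∧ ∀ p : Submodule ℂ E, IsClosed (p : Set E) →
    (∀ g : G, ∀ v ∈ p, ρ g v ∈ p) → p = ⊥ ∨ p = ⊤

namespace IsTopIrreducible

lemma dense_span_orbit (hρ : IsTopIrreducible ρ) {u : E} (hu : u ≠ 0) :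
    Dense (Submodule.span ℂ (Set.range fun g => ρ g u) : Set E) := by
  let p := Submodule.span ℂ (Set.range fun g => ρ g u)
  have hup : u ∈ p := Submodule.subset_span ⟨1, by simp⟩
  have hmap (g : G) : Set.MapsTo (ρ g) p p := by
    refine Submodule.span_le (p := p.comap (ρ g).toLinearEquiv.toLinearMap).2 ?_
    rintro _ ⟨h, rfl⟩
    exact Submodule.subset_span ⟨g * h, by simp⟩
  have htop : p.topologicalClosure = ⊤ :=
    (hρ.2 _ p.isClosed_topologicalClosure fun g v hv =>
      (hmap g).closure (ρ g).continuous hv).resolve_left fun hbot =>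
        hu (p.topologicalClosure.eq_bot_iff.1 hbot u (p.le_topologicalClosure hup))
  exact Submodule.dense_iff_topologicalClosure_eq_top.2 htop

lemma eq_zero_or_eq_zero_of_mul_eq_zero (hρ : IsTopIrreducible ρ) {A B : E →L[ℂ] E}
    (hA : ∀ g, Commute A (ρ g : E →L[ℂ] E)) (hAB : A * B = 0) : A = 0 ∨ B = 0 := by
  have hinv (g : G) (v : E) (hv : v ∈ A.ker) : ρ g v ∈ A.ker := by
    have hcomm : A (ρ g v) = ρ g (A v) := DFunLike.congr_fun (hA g).eq v
    exact hcomm.trans <| (congrArg (ρ g) hv).trans (map_zero _)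
  rcases hρ.2 A.ker A.isClosed_ker hinv with hbot | htop
  · right
    ext v
    exact A.ker.eq_bot_iff.1 hbot (B v) (DFunLike.congr_fun hAB v)
  · left
    ext v
    exact LinearMap.mem_ker.1 (htop ▸ Submodule.mem_top)

variable [CompleteSpace E]

theorem exists_eq_smul_of_commute (hρ : IsTopIrreducible ρ) {T : E →L[ℂ] E} (hT : IsSelfAdjoint T)
    (hcomm : ∀ g, Commute T (ρ g : E →L[ℂ] E)) : ∃ c : ℂ, ∀ v, T v = c • v := by
  have := hρ.1
  obtain ⟨r, rfl⟩ := exists_eq_algebraMap_of_cfc_mul_eq_zero hT fun f g =>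
    hρ.eq_zero_or_eq_zero_of_mul_eq_zero fun x => (hcomm x).cfc_real f
  exact ⟨r, fun v => by simp [Algebra.algebraMap_eq_smul_one]⟩

theorem isPure_matrixCoeff (hρ : IsTopIrreducible ρ) {u : E} (hu : u ≠ 0) :
    IsPure (matrixCoeff ρ u) := by
  refine ⟨isPositiveType_matrixCoeff ρ u, fun α β hα hβ hadd => ?_⟩
  have hdense := hρ.dense_span_orbit hu
  have hsub : Matrix.gram ℂ (fun g => ρ g u) - groupKernel α = groupKernel β := by
    rw [gram_orbit, ← hadd]
    ext g h
    simp [groupKernel]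
  obtain ⟨T, hT, hTα⟩ := exists_isSelfAdjoint_inner_eq hdense hα (hsub ▸ hβ)
  have hcomm (g : G) : Commute T (ρ g : E →L[ℂ] E) := by
    refine continuousLinearMap_ext_inner hdense fun x y => ?_
    calc ⟪T (ρ g (ρ x u)), ρ y u⟫_ℂ = groupKernel α (g * x) y := by simp [← hTα]
      _ = groupKernel α x (g⁻¹ * y) := by simp [groupKernel, mul_assoc]
      _ = ⟪ρ g (T (ρ x u)), ρ g (ρ (g⁻¹ * y) u)⟫_ℂ := by
          rw [← hTα, LinearIsometryEquiv.inner_map_map]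
      _ = ⟪ρ g (T (ρ x u)), ρ y u⟫_ℂ := by simp
  obtain ⟨c, hc⟩ := hρ.exists_eq_smul_of_commute hT hcomm
  refine ⟨star c, funext fun g => ?_⟩
  simpa [hc, inner_smul_left, matrixCoeff, groupKernel] using (hTα g 1).symm

end IsTopIrreducible

end Representation

section AsymptoticPurity

variable {G : Type*} [Group G] {φ : G → ℂ} {κ : Type*} {l : Filter κ}

theorem IsPure.tendsto_sub_smul (hφ : IsPure φ) (h1 : φ 1 = 1) {α β : κ → G → ℂ}
    (hα : ∀ k, IsPositiveType (α k)) (hβ : ∀ k, IsPositiveType (β k))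
    (hadd : Tendsto (α + β) l (𝓝 φ)) : Tendsto (fun k => α k - α k 1 • φ) l (𝓝 0) := by
  refine (tendsto_iff_ultrafilter _ _ _).2 fun f hf => ?_
  have hadd := hadd.mono_left hf
  have hbound : ∀ᶠ k in f, α k ∈ Set.univ.pi fun _ => Metric.closedBall (0 : ℂ) 2 := by
    have hre := (Complex.continuous_re.tendsto _).comp (tendsto_pi_nhds.1 hadd 1)
    filter_upwards [hre.eventually_le_const (u := 2) (by simp [h1])] with k hk g _
    have hβk := (Complex.nonneg_iff.1 (hβ k).apply_one_nonneg).1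
    simp only [Function.comp_apply, Pi.add_apply, Complex.add_re] at hk
    rw [mem_closedBall_zero_iff]
    linarith [(hα k).norm_apply_le g]
  obtain ⟨a, -, ha : Tendsto α f (𝓝 a)⟩ :=
    (isCompact_univ_pi fun _ => isCompact_closedBall (0 : ℂ) 2).ultrafilter_le_nhds (f.map α)
      (le_principal_iff.2 hbound)
  have hb : Tendsto β f (𝓝 (φ - a)) := by simpa using hadd.sub ha
  obtain ⟨c, rfl⟩ := hφ.exists_eq_smul a (φ - a)
    (isClosed_setOf_isPositiveType.mem_of_tendsto ha (.of_forall hα))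
    (isClosed_setOf_isPositiveType.mem_of_tendsto hb (.of_forall hβ)) (add_sub_cancel _ _)
  simpa [h1] using ha.sub ((tendsto_pi_nhds.1 ha 1).smul_const φ)

variable {J : κ → Type*} [∀ k, Fintype (J k)] {t : ∀ k, J k → ℝ} {ψ : ∀ k, J k → G → ℂ}

theorem IsPure.tendsto_sum_mul_sub (hφ : IsPure φ) (h1 : φ 1 = 1) (ht : ∀ k j, 0 ≤ t k j)
    (hψ : ∀ k j, IsPositiveType (ψ k j)) (hψ1 : ∀ k j, ψ k j 1 = 1)
    (hlim : Tendsto (fun k => ∑ j, t k j • ψ k j) l (𝓝 φ))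
    {r : ∀ k, J k → ℝ} (hr : ∀ k j, r k j ∈ Set.Icc 0 1) (g : G) :
    Tendsto (fun k => ∑ j, (t k j * r k j : ℝ) * (ψ k j g - φ g)) l (𝓝 0) := by
  have hα (k : κ) : IsPositiveType (∑ j, (t k j * r k j) • ψ k j) :=
    .sum_smul (fun j _ => mul_nonneg (ht k j) (hr k j).1) fun j _ => hψ k j
  have hβ (k : κ) : IsPositiveType (∑ j, (t k j * (1 - r k j)) • ψ k j) :=
    .sum_smul (fun j _ => mul_nonneg (ht k j) (sub_nonneg.2 (hr k j).2)) fun j _ => hψ k j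
  have hadd (k : κ) : ∑ j, t k j • ψ k j =
      ∑ j, (t k j * r k j) • ψ k j + ∑ j, (t k j * (1 - r k j)) • ψ k j := by
    simp only [← Finset.sum_add_distrib, ← add_smul, ← mul_add, add_sub_cancel, mul_one]
  refine (tendsto_pi_nhds.1 (hφ.tendsto_sub_smul h1 hα hβ (hlim.congr hadd)) g).congr fun k => ?_
  simp [hψ1, mul_sub, Finset.sum_mul]

theorem IsPure.tendsto_sum_mul_norm_sub (hφ : IsPure φ) (h1 : φ 1 = 1) (ht : ∀ k j, 0 ≤ t k j)
    (hψ : ∀ k j, IsPositiveType (ψ k j)) (hψ1 : ∀ k j, ψ k j 1 = 1)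
    (hlim : Tendsto (fun k => ∑ j, t k j • ψ k j) l (𝓝 φ)) (g : G) :
    Tendsto (fun k => ∑ j, t k j * ‖ψ k j g - φ g‖) l (𝓝 0) := by
  -- Choosing `r` as the indicator of a half-plane isolates a positive part.
  have hdir (ω : ℂ) : Tendsto (fun k => ∑ j, t k j * max (ω * (ψ k j g - φ g)).re 0) l (𝓝 0) := by
    let r (k : κ) (j : J k) : ℝ := if 0 ≤ (ω * (ψ k j g - φ g)).re then 1 else 0
    have hr (k : κ) (j : J k) : r k j ∈ Set.Icc 0 1 := by
      simp only [r]
      split_ifs <;> simp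
    have hre := (Complex.continuous_re.tendsto _).comp
      ((hφ.tendsto_sum_mul_sub h1 ht hψ hψ1 hlim hr g).const_mul ω)
    rw [mul_zero, Complex.zero_re] at hre
    refine hre.congr fun k => ?_
    rw [Function.comp_apply, Finset.mul_sum, Complex.re_sum]
    refine Finset.sum_congr rfl fun j _ => ?_
    rw [mul_left_comm, Complex.re_ofReal_mul, mul_assoc]
    congr 1
    grind
  have hsum := ((hdir 1).add (hdir (-1))).add ((hdir (-Complex.I)).add (hdir Complex.I))
  simp only [← Finset.sum_add_distrib, ← mul_add, add_zero] at hsum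
  refine squeeze_zero (fun k => Finset.sum_nonneg fun j _ => mul_nonneg (ht k j) (norm_nonneg _))
    (fun k => Finset.sum_le_sum fun j _ => mul_le_mul_of_nonneg_left ?_ (ht k j)) hsum
  refine (Complex.norm_le_abs_re_add_abs_im _).trans_eq ?_
  simp [← max_zero_add_max_neg_zero_eq_abs_self]

end AsymptoticPurity

section Raikov

open MeasureTheory
open scoped Pointwise

variable {G : Type*} [Group G]

lemma IsPositiveType.norm_sub_le_of_two_mul_one_sub_re_le {φ ψ : G → ℂ}
    (hφ : IsPositiveType φ) (hψ : IsPositiveType ψ) (hφ1 : φ 1 = 1) (hψ1 : ψ 1 = 1)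
    {κ : ℝ} (hκ : 0 < κ) {x : G} (hx : 2 * (1 - (φ x).re) ≤ κ ^ 2) (g : G) :
    ‖ψ g - φ g‖ ≤ 2 * κ + (κ⁻¹ * ‖ψ x - φ x‖ + ‖ψ (g * x) - φ (g * x)‖) := by
  have hφx : ‖φ (g * x) - φ g‖ ≤ κ := by
    refine le_of_sq_le_sq ?_ hκ.le
    simpa [hφ1] using (hφ.norm_sub_sq_le (g * x) g).trans (by simpa [hφ1] using hx)
  -- `√(κ ^ 2 + 2 * d) ≤ κ + d / κ` for `d = ‖ψ x - φ x‖`; the bound must be linear in `d` so that it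
  -- can be averaged over `x`.
  have hψx : ‖ψ (g * x) - ψ g‖ ≤ κ + κ⁻¹ * ‖ψ x - φ x‖ := by
    refine le_of_sq_le_sq ?_ (by positivity)
    have hre : (φ x).re - (ψ x).re ≤ ‖ψ x - φ x‖ := by
      rw [norm_sub_rev, ← Complex.sub_re]
      exact Complex.re_le_norm _
    calc ‖ψ (g * x) - ψ g‖ ^ 2 ≤ 2 * (1 - (ψ x).re) := by
          simpa [hψ1] using hψ.norm_sub_sq_le (g * x) g
      _ ≤ κ ^ 2 + 2 * ‖ψ x - φ x‖ := by linarith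
      _ ≤ κ ^ 2 + 2 * ‖ψ x - φ x‖ + (κ⁻¹ * ‖ψ x - φ x‖) ^ 2 := by
          linarith [sq_nonneg (κ⁻¹ * ‖ψ x - φ x‖)]
      _ = (κ + κ⁻¹ * ‖ψ x - φ x‖) ^ 2 := by field_simp; ring
  calc ‖ψ g - φ g‖ = ‖(ψ (g * x) - φ (g * x)) - (ψ (g * x) - ψ g) + (φ (g * x) - φ g)‖ := by
        congr 1; ring
    _ ≤ ‖ψ (g * x) - φ (g * x)‖ + ‖ψ (g * x) - ψ g‖ + ‖φ (g * x) - φ g‖ :=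
        (norm_add_le _ _).trans (by gcongr; exact norm_sub_le _ _)
    _ ≤ 2 * κ + (κ⁻¹ * ‖ψ x - φ x‖ + ‖ψ (g * x) - φ (g * x)‖) := by linarith

variable [TopologicalSpace G] [IsTopologicalGroup G] [LocallyCompactSpace G] [MeasurableSpace G]
  [BorelSpace G] {μ : Measure G} [μ.IsHaarMeasure]

lemma setIntegral_mul_left_le {f : G → ℝ} (hf : Continuous f) (hf0 : 0 ≤ f) {V K : Set G}
    (hK : IsCompact K) {g : G} (hgV : g • V ⊆ K) :
    ∫ x in V, f (g * x) ∂μ ≤ ∫ x in K, f x ∂μ := by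
  calc ∫ x in V, f (g * x) ∂μ = ∫ x in g • V, f x ∂μ :=
        ((measurePreserving_mul_left μ g).setIntegral_image_emb
          (MeasurableEquiv.mulLeft g).measurableEmbedding f V).symm
    _ ≤ ∫ x in K, f x ∂μ :=
        setIntegral_mono_set (hf.locallyIntegrable.integrableOn_isCompact hK) (.of_forall hf0)
          hgV.eventuallyLE

lemma exists_mem_mul_add_le {f : G → ℝ} (hf : Continuous f) (hf0 : 0 ≤ f) {V K : Set G}
    (hV : IsCompact V) (hμV : μ V ≠ 0) (hK : IsCompact K) (hVK : V ⊆ K) {g : G} (hgV : g • V ⊆ K)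
    {a : ℝ} (ha : 0 ≤ a) :
    ∃ x ∈ V, a * f x + f (g * x) ≤ (a + 1) * (∫ x in K, f x ∂μ) / μ.real V := by
  have hint (h : G) : IntegrableOn (fun x => f (h * x)) V μ :=
    (hf.comp (continuous_const_mul h)).locallyIntegrable.integrableOn_isCompact hV
  have hint_one : IntegrableOn f V μ := by simpa only [one_mul] using hint 1
  have hle_one : ∫ x in V, f x ∂μ ≤ ∫ x in K, f x ∂μ := by
    simpa only [one_mul] using setIntegral_mul_left_le (g := 1) hf hf0 hK (by rwa [one_smul])
  obtain ⟨x, hxV, hx⟩ := exists_le_setAverage hμV hV.measure_lt_top.ne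
    ((hint_one.const_mul a).add (hint g))
  refine ⟨x, hxV, hx.trans ?_⟩
  rw [setAverage_eq, integral_add' (hint_one.const_mul a) (hint g), integral_const_mul,
    smul_eq_mul, inv_mul_eq_div, add_mul, one_mul]
  gcongr
  exact setIntegral_mul_left_le hf hf0 hK hgV

theorem IsPositiveType.exists_forall_norm_sub_lt {φ : G → ℂ} (hφ : IsPositiveType φ)
    (hφc : Continuous φ) (hφ1 : φ 1 = 1) {C : Set G} (hC : IsCompact C) {ε : ℝ} (hε : 0 < ε) :
    ∃ K, IsCompact K ∧ ∃ δ > 0, ∀ ψ : G → ℂ, IsPositiveType ψ → Continuous ψ → ψ 1 = 1 →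
      ∫ x in K, ‖ψ x - φ x‖ ∂μ < δ → ∀ g ∈ C, ‖ψ g - φ g‖ < ε := by
  let κ := ε / 3
  have hκ : 0 < κ := by positivity
  obtain ⟨V, hV1, hVκ, hV⟩ :
      ∃ V ∈ 𝓝 (1 : G), V ⊆ {x | 2 * (1 - (φ x).re) < κ ^ 2} ∧ IsCompact V := by
    have hcont : Continuous fun x => 2 * (1 - (φ x).re) := by fun_prop
    exact local_compact_nhds (hcont.continuousAt.eventually_lt_const (by simp [hφ1, hκ]))
  have hμV : μ V ≠ 0 := (Measure.measure_pos_of_mem_nhds μ hV1).ne'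
  have hμV_pos : 0 < μ.real V := ENNReal.toReal_pos hμV hV.measure_lt_top.ne
  have hK : IsCompact (insert 1 C * V) := (hC.insert 1).mul hV
  refine ⟨_, hK, κ * μ.real V / (κ⁻¹ + 1), by positivity, fun ψ hψ hψc hψ1 hlt g hg => ?_⟩
  obtain ⟨x, hxV, hx⟩ := exists_mem_mul_add_le (hψc.sub hφc).norm (fun _ => norm_nonneg _) hV hμV
    hK (Set.subset_mul_right V (Set.mem_insert 1 C))
    (Set.smul_set_subset_mul (Set.mem_insert_of_mem 1 hg)) (inv_nonneg.2 hκ.le)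
  have hx_lt : κ⁻¹ * ‖ψ x - φ x‖ + ‖ψ (g * x) - φ (g * x)‖ < κ := by
    refine hx.trans_lt ?_
    rwa [div_lt_iff₀ hμV_pos, mul_comm, ← lt_div_iff₀ (by positivity)]
  calc ‖ψ g - φ g‖ ≤ 2 * κ + (κ⁻¹ * ‖ψ x - φ x‖ + ‖ψ (g * x) - φ (g * x)‖) :=
        hφ.norm_sub_le_of_two_mul_one_sub_re_le hψ hφ1 hψ1 hκ (hVκ hxV).le g
    _ < 2 * κ + κ := by gcongr
    _ = ε := by ring

end Raikov

section Selection

open MeasureTheory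

variable {G : Type*} [Group G] [TopologicalSpace G]

lemma mem_closure_iff_forall_isCompact {X Y : Type*} [TopologicalSpace X] [PseudoMetricSpace Y]
    {A : Set C(X, Y)} {f : C(X, Y)} :
    f ∈ closure A ↔
      ∀ C ε, IsCompact C → 0 < ε → ∃ f' ∈ A, ∀ x ∈ C, dist (f' x) (f x) < ε := by
  have hbasis := nhds_basis_uniformity
    (Metric.uniformity_basis_dist (α := Y)).compactConvergenceUniformity (x := f)
  simp [mem_closure_iff_nhds_basis hbasis]

theorem IsPure.tendsto_sum_mul_setIntegral_norm_sub [MeasurableSpace G] [OpensMeasurableSpace G]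
    {μ : Measure G} [IsLocallyFiniteMeasure μ] {φ : C(G, ℂ)} (hφ : IsPure φ) (h1 : φ 1 = 1)
    {J : ℕ → Type*} [∀ k, Fintype (J k)] {t : ∀ k, J k → ℝ} {ψ : ∀ k, J k → C(G, ℂ)}
    (ht : ∀ k j, 0 ≤ t k j) (ht1 : ∀ k, ∑ j, t k j = 1)
    (hψ : ∀ k j, IsPositiveType (ψ k j)) (hψ1 : ∀ k j, ψ k j 1 = 1)
    (hlim : Tendsto (fun k => ∑ j, t k j • ⇑(ψ k j)) atTop (𝓝 φ)) {K : Set G} (hK : IsCompact K) :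
    Tendsto (fun k => ∑ j, t k j * ∫ x in K, ‖ψ k j x - φ x‖ ∂μ) atTop (𝓝 0) := by
  have hcont (k : ℕ) (j : J k) : Continuous fun x => ‖ψ k j x - φ x‖ := by fun_prop
  have hint (k : ℕ) (j : J k) : IntegrableOn (fun x => ‖ψ k j x - φ x‖) K μ :=
    (hcont k j).locallyIntegrable.integrableOn_isCompact hK
  have hle (k : ℕ) (x : G) : ∑ j, t k j * ‖ψ k j x - φ x‖ ≤ 2 := by
    have hnorm {χ : G → ℂ} (hχ : IsPositiveType χ) (hχ1 : χ 1 = 1) : ‖χ x‖ ≤ 1 := by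
      simpa [hχ1] using hχ.norm_apply_le x
    calc ∑ j, t k j * ‖ψ k j x - φ x‖ ≤ ∑ j, t k j * 2 := by
          gcongr with j
          · exact ht k j
          · linarith [norm_sub_le (ψ k j x) (φ x), hnorm (hψ k j) (hψ1 k j),
              hnorm hφ.isPositiveType h1]
      _ = 2 := by rw [← Finset.sum_mul, ht1, one_mul]
  have hlim_int := tendsto_integral_of_dominated_convergence (μ := μ.restrict K) (fun _ => (2 : ℝ))
    (fun k => (continuous_finsetSum Finset.univ fun j _ =>
      (hcont k j).const_mul (t k j)).aestronglyMeasurable)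
    (integrableOn_const hK.measure_lt_top.ne)
    (fun k => .of_forall fun x => by
      rw [Real.norm_of_nonneg (Finset.sum_nonneg fun j _ => mul_nonneg (ht k j) (norm_nonneg _))]
      exact hle k x)
    (.of_forall fun x => hφ.tendsto_sum_mul_norm_sub h1 ht hψ hψ1 hlim x)
  rw [integral_zero] at hlim_int
  refine hlim_int.congr fun k => ?_
  rw [integral_finsetSum _ fun j _ => (hint k j).const_mul _]
  simp only [integral_const_mul]

variable [LocallyCompactSpace G] [SigmaCompactSpace G]
  {S : Set C(G, ℂ)} {φ : C(G, ℂ)}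

theorem IsPure.exists_setIntegral_norm_sub_lt [MeasurableSpace G] [OpensMeasurableSpace G]
    {μ : Measure G} [IsLocallyFiniteMeasure μ] (hφ : IsPure φ) (h1 : φ 1 = 1)
    (hS : ∀ ψ ∈ S, IsPositiveType ψ ∧ ψ 1 = 1)
    (hmem : φ ∈ closure (convexHull ℝ S)) {K : Set G} (hK : IsCompact K) {δ : ℝ} (hδ : 0 < δ) :
    ∃ ψ ∈ S, ∫ x in K, ‖ψ x - φ x‖ ∂μ < δ := by
  obtain ⟨χ, hχS, hχφ⟩ := mem_closure_iff_seq_limit.1 hmem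
  choose J _ t ψ ht ht1 hψS hχ using fun k => mem_convexHull_iff_exists_fintype.1 (hχS k)
  have hlim : Tendsto (fun k => ∑ j, t k j • ⇑(ψ k j)) atTop (𝓝 φ) := by
    refine tendsto_pi_nhds.2 fun g => ?_
    refine (((continuous_eval_const g).tendsto φ).comp hχφ).congr fun k => ?_
    simp [← hχ]
  have hsum := hφ.tendsto_sum_mul_setIntegral_norm_sub (μ := μ) h1 ht ht1
    (fun k j => (hS _ (hψS k j)).1) (fun k j => (hS _ (hψS k j)).2) hlim hK
  obtain ⟨k, hk⟩ := (hsum.eventually_lt_const hδ).exists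
  have hsum_lt : ∑ j, t k j * ∫ x in K, ‖ψ k j x - φ x‖ ∂μ < ∑ j, t k j * δ := by
    rwa [← Finset.sum_mul, ht1, one_mul]
  obtain ⟨j, -, hj⟩ := Finset.exists_lt_of_sum_lt hsum_lt
  exact ⟨ψ k j, hψS k j, lt_of_mul_lt_mul_left hj (ht k j)⟩

theorem IsPure.mem_closure_of_mem_closure_convexHull [IsTopologicalGroup G] (hφ : IsPure φ)
    (h1 : φ 1 = 1) (hS : ∀ ψ ∈ S, IsPositiveType ψ ∧ ψ 1 = 1)
    (hmem : φ ∈ closure (convexHull ℝ S)) :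
    φ ∈ closure S := by
  borelize G
  refine mem_closure_iff_forall_isCompact.2 fun C ε hC hε => ?_
  obtain ⟨K, hK, δ, hδ, hKδ⟩ := hφ.isPositiveType.exists_forall_norm_sub_lt (μ := Measure.haar)
    φ.continuous h1 hC hε
  obtain ⟨ψ, hψS, hψ⟩ := hφ.exists_setIntegral_norm_sub_lt (μ := Measure.haar) h1 hS hmem
    hK hδ
  simp only [dist_eq_norm]
  exact ⟨ψ, hψS, hKδ ψ (hS ψ hψS).1 ψ.continuous (hS ψ hψS).2 hψ⟩

end Selection

theorem weak_containment_limit_of_subsequence_general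
    {G : Type*} [TopologicalSpace G] [Group G] [IsTopologicalGroup G]
    [LocallyCompactSpace G] [SigmaCompactSpace G]
    {ι : Type*} {H : ι → Type*} [∀ i, NormedAddCommGroup (H i)] [∀ i, InnerProductSpace ℂ (H i)]
    (π : ∀ i, G →* (H i ≃ₗᵢ[ℂ] H i))
    (hπcont : ∀ (i : ι) (v : H i), Continuous fun g : G => π i g v)
    {E : Type*} [NormedAddCommGroup E] [InnerProductSpace ℂ E] [CompleteSpace E]
    (σ : G →* (E ≃ₗᵢ[ℂ] E)) (hσcont : ∀ v : E, Continuous fun g : G => σ g v)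
    (hσirr : IsTopIrreducible σ) {u : E} (hu : ‖u‖ = 1)
    (hweak : ∀ C : Set G, IsCompact C → ∀ ε : ℝ, 0 < ε →
      ∃ (m : ℕ) (idx : Fin m → ι) (w : ∀ j : Fin m, H (idx j)) (t : Fin m → ℝ),
        (∀ j, ‖w j‖ = 1) ∧ (∀ j, 0 ≤ t j) ∧ (∑ j, t j = 1) ∧
        ∀ g ∈ C, ‖matrixCoeff σ u g - ∑ j, (t j : ℂ) * matrixCoeff (π (idx j)) (w j) g‖ < ε) :
    ∃ (idx : ℕ → ι) (v : ∀ k : ℕ, H (idx k)), (∀ k, ‖v k‖ = 1) ∧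
      ∀ C : Set G, IsCompact C →
        TendstoUniformlyOn (fun k => matrixCoeff (π (idx k)) (v k)) (matrixCoeff σ u) atTop C := by
  let coeff (i : ι) (v : H i) : C(G, ℂ) :=
    ⟨matrixCoeff (π i) v, continuous_matrixCoeff (hπcont i v)⟩
  let φ : C(G, ℂ) := ⟨matrixCoeff σ u, continuous_matrixCoeff (hσcont u)⟩
  let S : Set C(G, ℂ) := {ψ | ∃ i v, ‖v‖ = 1 ∧ coeff i v = ψ}
  have hS : ∀ ψ ∈ S, IsPositiveType ψ ∧ ψ 1 = 1 := by
    rintro _ ⟨i, v, hv, rfl⟩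
    exact ⟨isPositiveType_matrixCoeff (π i) v, matrixCoeff_one (π i) hv⟩
  have hφ : φ ∈ closure (convexHull ℝ S) := by
    refine mem_closure_iff_forall_isCompact.2 fun C ε hC hε => ?_
    obtain ⟨m, idx, w, t, hw, ht, ht1, hlt⟩ := hweak C hC ε hε
    refine ⟨∑ j, t j • coeff (idx j) (w j), mem_convexHull_of_exists_fintype t _ ht ht1
      (fun j => ⟨idx j, w j, hw j, rfl⟩) rfl, fun g hg => ?_⟩
    simpa [dist_eq_norm', φ, coeff] using hlt g hg
  have hpure : IsPure φ := hσirr.isPure_matrixCoeff (norm_ne_zero_iff.1 (by simp [hu]))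
  obtain ⟨ψ, hψS, hψφ⟩ := mem_closure_iff_seq_limit.1
    (hpure.mem_closure_of_mem_closure_convexHull (matrixCoeff_one σ hu) hS hφ)
  choose idx v hv hψ using hψS
  obtain rfl : (fun k => coeff (idx k) (v k)) = ψ := funext hψ
  exact ⟨idx, v, hv, ContinuousMap.tendsto_iff_forall_isCompact_tendstoUniformlyOn.1 hψφ⟩

/-- **Proposition B.4.**
Let `G` be a locally compact Hausdorff second-countable topological group, `(πₙ, Hₙ)` a
sequence of irreducible unitary representations of `G`, and `(σ, E)` an irreducible unitary
representation of `G` weakly contained in the Hilbert direct sum of the `πₙ` (expressed via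
uniform approximation of normalized matrix coefficients on compact sets by convex combinations
of normalized matrix coefficients of the `πₙ`).  Then `σ` is a limit of a subsequence of
`(πₙ)`: every normalized matrix coefficient of `σ` is a uniform limit, on every compact subset
of `G`, of a sequence of normalized matrix coefficients of the `π_{n_k}`. -/
theorem weak_containment_limit_of_subsequence
    {G : Type*} [TopologicalSpace G] [Group G] [IsTopologicalGroup G]
    [LocallyCompactSpace G] [T2Space G] [SecondCountableTopology G]
    {H : ℕ → Type*} [∀ n, NormedAddCommGroup (H n)] [∀ n, InnerProductSpace ℂ (H n)]
    [∀ n, CompleteSpace (H n)]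
    (π : ∀ n, G →* (H n ≃ₗᵢ[ℂ] H n))
    (hπcont : ∀ (n : ℕ) (v : H n), Continuous fun g : G => π n g v)
    (hπirr : ∀ n : ℕ, Nontrivial (H n) ∧
      ∀ p : Submodule ℂ (H n), IsClosed (p : Set (H n)) →
        (∀ g : G, ∀ v ∈ p, π n g v ∈ p) → p = ⊥ ∨ p = ⊤)
    {E : Type*} [NormedAddCommGroup E] [InnerProductSpace ℂ E] [CompleteSpace E]
    (σ : G →* (E ≃ₗᵢ[ℂ] E))
    (hσcont : ∀ v : E, Continuous fun g : G => σ g v)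
    (hσirr : Nontrivial E ∧
      ∀ p : Submodule ℂ E, IsClosed (p : Set E) →
        (∀ g : G, ∀ v ∈ p, σ g v ∈ p) → p = ⊥ ∨ p = ⊤)
    (hweak : ∀ u : E, ‖u‖ = 1 → ∀ C : Set G, IsCompact C → ∀ ε : ℝ, 0 < ε →
      ∃ (m : ℕ) (idx : Fin m → ℕ) (w : ∀ j : Fin m, H (idx j)) (t : Fin m → ℝ),
        (∀ j, ‖w j‖ = 1) ∧ (∀ j, 0 ≤ t j) ∧ (∑ j, t j = 1) ∧
        ∀ g ∈ C,
          ‖(inner ℂ (σ g u) u : ℂ) -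
            ∑ j, (t j : ℂ) * (inner ℂ (π (idx j) g (w j)) (w j) : ℂ)‖ < ε) :
    ∀ u : E, ‖u‖ = 1 →
      ∃ (idx : ℕ → ℕ) (v : ∀ k : ℕ, H (idx k)),
        (∀ k, ‖v k‖ = 1) ∧
        ∀ C : Set G, IsCompact C →
          TendstoUniformlyOn (fun (k : ℕ) (g : G) => (inner ℂ (π (idx k) g (v k)) (v k) : ℂ))
            (fun g : G => (inner ℂ (σ g u) u : ℂ)) atTop C := by
  intro u hu
  exact weak_containment_limit_of_subsequence_general π hπcont σ hσcont hσirr hu (hweak u hu)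
end

section
/- Let G be a locally compact Hausdorff, second-countable topological group. Let (πₙ, Hₙ), for n ∈ ℕ, be irreducible unitary representations of G and let (σ, H) be an irreducible unitary representation of G. Assume: (a) σ is weakly contained in the Hilbert direct sum of the πₙ, i.e., for every unit vector u ∈ H, every compact C ⊆ G and every ε > 0 there are finitely many indices n₁, …, n_m, unit vectors wⱼ ∈ H_{nⱼ} and nonnegative reals tⱼ summing to 1 with |⟪σ(g)u, u⟫ − Σⱼ tⱼ·⟪π_{nⱼ}(g)wⱼ, wⱼ⟫| < ε for all g ∈ C; and (b) σ is isolated among Fell limits, i.e., whenever (ρ_k, E_k) is a sequence of irreducible unitary representations of G and w_k ∈ E_k are unit vectors such that g ↦ ⟪ρ_k(g)w_k, w_k⟫ converges uniformly on compact subsets of G to a normalized matrix coefficient g ↦ ⟪σ(g)u, u⟫ of σ (u a unit vector of H), then some ρ_k is unitarily equivalent to σ. Then there exists an index i such that πᵢ is unitarily equivalent to σ. -/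
open Filter Topology

universe u

/-! Let `φ g = ⟪σ g u, u⟫`, and let convex combinations `∑ j, t j * ψ j` of normalized
coefficients of the `π n` converge to `φ`. Rescaling the summands of the cyclic vector behind such
a combination by scalars of modulus at most one gives a dominated vector; the limit of its
coefficients along an ultrafilter is dominated by `φ`, hence a multiple of `φ` by Schur's lemma.
With the phases of `ψ j g - φ g` as scalars this says that `∑ j, t j * ‖ψ j g - φ g‖` tends to
zero for every `g`.

Dominated convergence and Markov's inequality then select a single `ψ j` close to `φ` off a set of
small measure in a given compact set, and the inequality
`‖ψ g - ψ (g * h)‖ ^ 2 ≤ 2 * (1 - re (ψ h))`, with `h` near `1` such that `h` and `g * h` both avoid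
the exceptional set, turns closeness in measure into uniform closeness on compact sets. Hence `φ`
is a limit of coefficients of individual `π n`, to which isolation applies. -/

theorem norm_le_of_denseRange_inner {𝕜 E ι : Type*} [RCLike 𝕜] [NormedAddCommGroup E]
    [InnerProductSpace 𝕜 E] {e : ι → E} (he : DenseRange e) {x : E} {C : ℝ}
    (hC : 0 ≤ C) (h : ∀ i, ‖inner 𝕜 x (e i)‖ ≤ C * ‖e i‖) : ‖x‖ ≤ C := by
  rcases eq_or_ne x 0 with rfl | hx
  · rwa [norm_zero]
  have hself : ‖inner 𝕜 x x‖ ≤ C * ‖x‖ :=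
    he.induction_on (p := fun y => ‖inner 𝕜 x y‖ ≤ C * ‖y‖) x
      (isClosed_le (by fun_prop) (by fun_prop)) h
  rw [← inner_self_re_eq_norm, inner_self_eq_norm_mul_norm] at hself
  exact le_of_mul_le_mul_right hself (norm_pos_iff.2 hx)

section Measure

open MeasureTheory Pointwise

theorem exists_mem_notMem_mul_notMem {G : Type*} [Group G] [MeasurableSpace G] [MeasurableMul G]
    {μ : Measure G} [μ.IsMulLeftInvariant] {V B : Set G} (hB : μ B ≠ ⊤)
    (hBV : μ.real B + μ.real B < μ.real V) (g : G) : ∃ h ∈ V, h ∉ B ∧ g * h ∉ B := by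
  by_contra! hcover
  have hgB : μ ((g * ·) ⁻¹' B) = μ B := measure_preimage_mul μ g B
  have hV : μ.real V ≤ μ.real (B ∪ (g * ·) ⁻¹' B) :=
    measureReal_mono (fun h hh => or_iff_not_imp_left.2 (hcover h hh))
      (measure_union_ne_top hB (hgB ▸ hB))
  have hunion := measureReal_union_le (μ := μ) B ((g * ·) ⁻¹' B)
  rw [measureReal_def (s := _ ⁻¹' B), hgB, ← measureReal_def] at hunion
  linarith

theorem exists_isFiniteMeasure_forall_exists_notMem {G : Type*} [TopologicalSpace G] [Group G]
    [IsTopologicalGroup G] [LocallyCompactSpace G] [MeasurableSpace G] [BorelSpace G] {C V : Set G}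
    (hC : IsCompact C) (hVcomp : IsCompact V) (hV : V ∈ 𝓝 1) :
    ∃ ν : Measure G, IsFiniteMeasure ν ∧ ∃ δ > 0, ∀ B, MeasurableSet B → ν.real B < δ →
      ∀ g ∈ C, ∃ h ∈ V, h ∉ B ∧ g * h ∉ B := by
  let μ : Measure G := .haar
  have hL : IsCompact (insert 1 C * V) := (hC.insert 1).mul hVcomp
  have hμV : 0 < μ.real V :=
    ENNReal.toReal_pos (μ.measure_pos_of_mem_nhds hV).ne' hVcomp.measure_ne_top
  refine ⟨μ.restrict (insert 1 C * V), isFiniteMeasure_restrict.2 hL.measure_ne_top,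
    μ.real V / 2, half_pos hμV, fun B hB hBδ g hg => ?_⟩
  rw [measureReal_restrict_apply hB] at hBδ
  obtain ⟨h, hhV, hh, hgh⟩ := exists_mem_notMem_mul_notMem (V := V)
    (measure_ne_top_of_subset Set.inter_subset_right hL.measure_ne_top) (by linarith) g
  have hhL : h ∈ insert 1 C * V := by simpa using Set.mul_mem_mul (Set.mem_insert 1 C) hhV
  have hghL : g * h ∈ insert 1 C * V := Set.mul_mem_mul (Set.mem_insert_of_mem 1 hg) hhV
  exact ⟨h, hhV, fun hB => hh ⟨hB, hhL⟩, fun hB => hgh ⟨hB, hghL⟩⟩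

theorem eventually_exists_measureReal_lt {X κ : Type*} [MeasurableSpace X] {ν : Measure X}
    [IsFiniteMeasure ν] {l : Filter κ} [l.IsCountablyGenerated] {J : κ → Type*}
    [∀ k, Fintype (J k)] {t : ∀ k, J k → ℝ} (ht : ∀ k j, 0 ≤ t k j) (hsum : ∀ k, ∑ j, t k j = 1)
    {D : ∀ k, J k → X → ℝ} (hD : ∀ k j, Measurable (D k j)) {M : ℝ}
    (hM : ∀ k j x, D k j x ∈ Set.Icc 0 M)
    (hlim : ∀ x, Tendsto (fun k => ∑ j, t k j * D k j x) l (𝓝 0)) {γ η : ℝ} (hγ : 0 < γ)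
    (hη : 0 < η) : ∀ᶠ k in l, ∃ j, ν.real {x | γ ≤ D k j x} < η := by
  have hint (k j) : Integrable (D k j) ν :=
    .of_mem_Icc 0 M (hD k j).aemeasurable (ae_of_all _ (hM k j))
  have hbound (k x) : ‖∑ j, t k j * D k j x‖ ≤ M := by
    rw [Real.norm_of_nonneg (Finset.sum_nonneg fun j _ => mul_nonneg (ht k j) (hM k j x).1)]
    calc ∑ j, t k j * D k j x ≤ ∑ j, t k j * M := by
          gcongr with j
          exacts [ht k j, (hM k j x).2]
      _ = M := by rw [← Finset.sum_mul, hsum, one_mul]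
  have havg : Tendsto (fun k => ∑ j, t k j * ∫ x, D k j x ∂ν) l (𝓝 0) := by
    have := tendsto_integral_filter_of_dominated_convergence (μ := ν) (fun _ => M)
      (.of_forall fun k => (Finset.measurable_sum _ fun j _ =>
        (hD k j).const_mul (t k j)).aestronglyMeasurable)
      (.of_forall fun k => ae_of_all _ (hbound k)) (integrable_const M) (ae_of_all _ hlim)
    simpa only [integral_finsetSum _ fun j _ => (hint _ j).const_mul _, integral_const_mul,
      integral_zero] using this
  filter_upwards [havg.eventually_lt_const (mul_pos hγ hη)] with k hk
  obtain ⟨j, -, hj⟩ : ∃ j ∈ Finset.univ, t k j * ∫ x, D k j x ∂ν < t k j * (γ * η) :=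
    Finset.exists_lt_of_sum_lt (by rwa [← Finset.sum_mul, hsum, one_mul])
  refine ⟨j, lt_of_mul_lt_mul_left ?_ hγ.le⟩
  calc γ * ν.real {x | γ ≤ D k j x} ≤ ∫ x, D k j x ∂ν :=
        mul_meas_ge_le_integral_of_nonneg (ae_of_all _ fun x => (hM k j x).1) (hint k j) γ
    _ < γ * η := lt_of_mul_lt_mul_left hj (ht k j)

end Measure

theorem tendstoUniformlyOn_of_compactExhaustion {X E : Type*} [TopologicalSpace X]
    [SeminormedAddCommGroup E] (K : CompactExhaustion X) {F : ℕ → X → E} {f : X → E}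
    (h : ∀ k : ℕ, ∀ x ∈ K k, ‖f x - F k x‖ < 1 / (k + 1)) {C : Set X} (hC : IsCompact C) :
    TendstoUniformlyOn F f atTop C := by
  refine Metric.tendstoUniformlyOn_iff.2 fun ε hε => ?_
  obtain ⟨N, hN⟩ := K.exists_superset_of_isCompact hC
  filter_upwards [eventually_ge_atTop N,
    tendsto_one_div_add_atTop_nhds_zero_nat.eventually_lt_const hε] with k hNk hk x hx
  rw [dist_eq_norm]
  exact (h k x (K.subset hNk (hN hx))).trans hk

/-- An action of a group on a Hilbert space by unitary operators: a unitary representation without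
its strong continuity, which is assumed separately where it is needed. -/
abbrev UnitaryAction (G E : Type*) [Group G] [NormedAddCommGroup E] [InnerProductSpace ℂ E] :=
  G →* (E ≃ₗᵢ[ℂ] E)

namespace UnitaryAction

open ComplexConjugate MeasureTheory

variable {G : Type*} [Group G] {E : Type*} [NormedAddCommGroup E] [InnerProductSpace ℂ E]

/-- Topological irreducibility: the space is nonzero and has no closed invariant subspaces other
than `0` and itself. -/
def IsIrreducible (σ : UnitaryAction G E) : Prop :=
  Nontrivial E ∧ ∀ p : Submodule ℂ E, IsClosed (p : Set E) →
    (∀ g : G, ∀ v ∈ p, σ g v ∈ p) → p = ⊥ ∨ p = ⊤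

/-- The unitary `σ g` as a bounded operator. -/
abbrev operator (σ : UnitaryAction G E) (g : G) : E →L[ℂ] E :=
  (σ g).toContinuousLinearEquiv

/-- The matrix coefficient `g ↦ ⟪σ g v, w⟫`. -/
noncomputable def matrixCoeff (σ : UnitaryAction G E) (v w : E) (g : G) : ℂ :=
  inner ℂ (σ g v) w

/-- The action of the group algebra on a vector: `∑ a_g g ↦ ∑ a_g • σ g v`. -/
noncomputable def orbitMap (σ : UnitaryAction G E) (v : E) : (G →₀ ℂ) →ₗ[ℂ] E :=
  Finsupp.linearCombination ℂ fun g => σ g v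

/-- The sesquilinear form `(a, b) ↦ ∑ conj a_g * b_h * f (h⁻¹ g)` on the group algebra attached to
a function `f`; the function is of positive type when the form is positive semidefinite. -/
noncomputable def groupForm (f : G → ℂ) (a b : G →₀ ℂ) : ℂ :=
  a.sum fun g x => b.sum fun h y => conj x * y * f (h⁻¹ * g)

theorem map_mul_apply (σ : UnitaryAction G E) (g h : G) (v : E) : σ (g * h) v = σ g (σ h v) := by
  rw [map_mul, LinearIsometryEquiv.coe_mul, Function.comp_apply]

@[simp]
theorem orbitMap_single (σ : UnitaryAction G E) (v : E) (g : G) (x : ℂ) :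
    orbitMap σ v (Finsupp.single g x) = x • σ g v := by
  simp [orbitMap]

theorem map_orbitMap (σ : UnitaryAction G E) (g : G) (v : E) (a : G →₀ ℂ) :
    σ g (orbitMap σ v a) = orbitMap σ v (a.mapDomain (g * ·)) := by
  rw [orbitMap, Finsupp.linearCombination_mapDomain]
  simp only [Finsupp.linearCombination_apply, map_finsuppSum, map_smul, Function.comp_apply,
    map_mul_apply]

theorem inner_map_map_eq_matrixCoeff (σ : UnitaryAction G E) (v w : E) (g h : G) :
    inner ℂ (σ g v) (σ h w) = matrixCoeff σ v w (h⁻¹ * g) := by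
  rw [matrixCoeff, ← (σ h).inner_map_map (σ (h⁻¹ * g) v), ← map_mul_apply, mul_inv_cancel_left]

theorem inner_orbitMap_orbitMap (σ : UnitaryAction G E) (v w : E) (a b : G →₀ ℂ) :
    inner ℂ (orbitMap σ v a) (orbitMap σ w b) = groupForm (matrixCoeff σ v w) a b := by
  simp only [orbitMap, Finsupp.linearCombination_apply, groupForm, Finsupp.sum, sum_inner,
    inner_sum, inner_smul_left, inner_smul_right, inner_map_map_eq_matrixCoeff]
  rw [Finset.sum_comm]
  simp only [Finset.mul_sum, mul_assoc, mul_left_comm]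

theorem tendsto_groupForm {κ : Type*} {l : Filter κ} {f : κ → G → ℂ} {f₀ : G → ℂ}
    (h : ∀ g, Tendsto (fun k => f k g) l (𝓝 (f₀ g))) (a b : G →₀ ℂ) :
    Tendsto (fun k => groupForm (f k) a b) l (𝓝 (groupForm f₀ a b)) :=
  tendsto_finsetSum _ fun _ _ => tendsto_finsetSum _ fun _ _ => (h _).const_mul _

theorem matrixCoeff_smul_smul (σ : UnitaryAction G E) (b c : ℂ) (v w : E) (g : G) :
    matrixCoeff σ (b • v) (c • w) g = conj b * c * matrixCoeff σ v w g := by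
  simp only [matrixCoeff, map_smul, inner_smul_left, inner_smul_right, mul_assoc, mul_left_comm]

theorem orbitMap_smul (σ : UnitaryAction G E) (c : ℂ) (v : E) (a : G →₀ ℂ) :
    orbitMap σ (c • v) a = c • orbitMap σ v a := by
  simp only [orbitMap, Finsupp.linearCombination_apply, Finsupp.smul_sum, map_smul, smul_comm c]

theorem norm_matrixCoeff_le (σ : UnitaryAction G E) (v w : E) (g : G) :
    ‖matrixCoeff σ v w g‖ ≤ ‖v‖ * ‖w‖ := by
  simpa [matrixCoeff] using norm_inner_le_norm (𝕜 := ℂ) (σ g v) w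

theorem norm_matrixCoeff_sub_mem_Icc {F : Type*} [NormedAddCommGroup F] [InnerProductSpace ℂ F]
    (σ : UnitaryAction G E) (ρ : UnitaryAction G F) {u : E} {w : F} (hu : ‖u‖ = 1) (hw : ‖w‖ = 1)
    (g : G) : ‖matrixCoeff ρ w w g - matrixCoeff σ u u g‖ ∈ Set.Icc 0 2 := by
  refine ⟨norm_nonneg _, (norm_sub_le_of_le (norm_matrixCoeff_le ρ w w g)
    (norm_matrixCoeff_le σ u u g)).trans_eq ?_⟩
  norm_num [hu, hw]

theorem norm_matrixCoeff_sub_sq_le (σ : UnitaryAction G E) {w : E} (hw : ‖w‖ = 1) (g h : G) :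
    ‖matrixCoeff σ w w g - matrixCoeff σ w w (g * h)‖ ^ 2 ≤
      2 * (1 - (matrixCoeff σ w w h).re) := by
  have hsub : matrixCoeff σ w w g - matrixCoeff σ w w (g * h) =
      matrixCoeff σ (w - σ h w) w g := by
    simp only [matrixCoeff, map_mul_apply, map_sub, inner_sub_left]
  have hnorm : ‖w - σ h w‖ ^ 2 = 2 * (1 - (matrixCoeff σ w w h).re) := by
    rw [norm_sub_rev, norm_sub_sq (𝕜 := ℂ), (σ h).norm_map, hw, matrixCoeff,
      RCLike.re_eq_complex_re]
    ring
  rw [hsub, ← hnorm]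
  gcongr
  simpa [hw] using norm_matrixCoeff_le σ (w - σ h w) w g

theorem norm_matrixCoeff_sub_le_of_mul_right {F : Type*} [NormedAddCommGroup F]
    [InnerProductSpace ℂ F] (σ : UnitaryAction G E) (ρ : UnitaryAction G F) {u : E} {w : F}
    (hu : ‖u‖ = 1) (hw : ‖w‖ = 1) {η : ℝ} (hη : 0 ≤ η) {g h : G}
    (hσ : 1 - (matrixCoeff σ u u h).re ≤ η ^ 2 / 2)
    (hh : ‖matrixCoeff ρ w w h - matrixCoeff σ u u h‖ ≤ η ^ 2 / 2)
    (hgh : ‖matrixCoeff ρ w w (g * h) - matrixCoeff σ u u (g * h)‖ ≤ η) :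
    ‖matrixCoeff ρ w w g - matrixCoeff σ u u g‖ ≤ 4 * η := by
  have hσg : ‖matrixCoeff σ u u g - matrixCoeff σ u u (g * h)‖ ≤ η :=
    le_of_sq_le_sq ((norm_matrixCoeff_sub_sq_le σ hu g h).trans (by linarith)) hη
  have hre := (abs_le.1 ((Complex.abs_re_le_norm _).trans hh)).1
  have hρg : ‖matrixCoeff ρ w w g - matrixCoeff ρ w w (g * h)‖ ≤ 2 * η := by
    refine le_of_sq_le_sq ((norm_matrixCoeff_sub_sq_le ρ hw g h).trans ?_) (by positivity)
    rw [Complex.sub_re] at hre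
    nlinarith
  calc ‖matrixCoeff ρ w w g - matrixCoeff σ u u g‖
      = ‖(matrixCoeff ρ w w g - matrixCoeff ρ w w (g * h)) +
          (matrixCoeff ρ w w (g * h) - matrixCoeff σ u u (g * h)) -
          (matrixCoeff σ u u g - matrixCoeff σ u u (g * h))‖ := by congr 1; ring
    _ ≤ 2 * η + η + η := norm_sub_le_of_le (norm_add_le_of_le hρg hgh) hσg
    _ = 4 * η := by ring

theorem IsIrreducible.denseRange_orbitMap {σ : UnitaryAction G E} (hσ : IsIrreducible σ) {u : E}
    (hu : u ≠ 0) : DenseRange (orbitMap σ u) := by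
  set R := LinearMap.range (orbitMap σ u)
  have hinv : ∀ g, ∀ v ∈ R, σ g v ∈ R := by
    rintro g _ ⟨a, rfl⟩
    exact ⟨_, (map_orbitMap σ g u a).symm⟩
  have hmem : u ∈ R.topologicalClosure := R.le_topologicalClosure ⟨.single 1 1, by simp⟩
  have htop : R.topologicalClosure = ⊤ :=
    (hσ.2 _ R.isClosed_topologicalClosure fun g v hv =>
      map_mem_closure (σ g).continuous hv (hinv g)).resolve_left
        fun h => hu (by simpa only [h, Submodule.mem_bot] using hmem)
  exact Submodule.dense_iff_topologicalClosure_eq_top.2 htop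

theorem IsIrreducible.eq_zero_or_ker_eq_bot {σ : UnitaryAction G E} (hσ : IsIrreducible σ)
    {T : E →L[ℂ] E} (hT : ∀ g, Commute T (operator σ g)) : T = 0 ∨ T.ker = ⊥ := by
  refine (hσ.2 T.ker T.isClosed_ker fun g v hv => ?_).symm.imp_left fun h => ?_
  · have hgv : T (σ g v) = σ g (T v) := DFunLike.congr_fun (hT g).eq v
    have hTv : T v = 0 := hv
    exact hgv.trans (by rw [hTv, map_zero])
  · exact ContinuousLinearMap.coe_injective (LinearMap.ker_eq_top.1 h)

section Schur

variable [CompleteSpace E] {σ : UnitaryAction G E}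

theorem star_operator (σ : UnitaryAction G E) (g : G) : star (operator σ g) = operator σ g⁻¹ := by
  rw [operator, operator, map_inv]
  exact (σ g).adjoint_eq_symm

theorem commute_star_operator {T : E →L[ℂ] E} (hT : ∀ g, Commute T (operator σ g)) (g : G) :
    Commute (star T) (operator σ g) := by
  rw [commute_star_comm, star_operator]
  exact hT g⁻¹

/-- If `T` had two spectral values, two continuous functions with disjoint supports would split it
into nonzero intertwiners with product zero. -/
theorem IsIrreducible.subsingleton_spectrum (hσ : IsIrreducible σ) {T : E →L[ℂ] E}
    (hT : IsSelfAdjoint T) (hTσ : ∀ g, Commute T (operator σ g)) :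
    (spectrum ℝ T).Subsingleton := by
  by_contra hns
  obtain ⟨a, ha, b, hb, hab⟩ := (Set.not_subsingleton_iff.1 hns).exists_lt
  obtain ⟨m, ham, hmb⟩ := exists_between hab
  have hmul : cfc (fun x => max (x - m) 0) T * cfc (fun x => max (m - x) 0) T = 0 := by
    rw [← cfc_mul _ _ T, ← cfc_zero ℝ T]
    congr 1
    funext x
    rcases le_total x m with h | h <;> simp [h]
  have hne {f : ℝ → ℝ} (hf : Continuous f) {x : ℝ} (hx : x ∈ spectrum ℝ T) (hfx : f x ≠ 0) :
      cfc f T ≠ 0 := fun h0 =>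
    hfx ((cfc_eq_cfc_iff_eqOn (g := 0)).1 (h0.trans (cfc_zero ℝ T).symm) hx)
  have hker := (hσ.eq_zero_or_ker_eq_bot fun g => (hTσ g).cfc_real _).resolve_left
    (hne (f := fun x => max (x - m) 0) (by fun_prop) hb (by simpa using hmb))
  refine hne (f := fun x => max (m - x) 0) (by fun_prop) ha (by simpa using ham) ?_
  ext v
  exact LinearMap.ker_eq_bot'.1 hker _ (DFunLike.congr_fun hmul v)

theorem IsIrreducible.exists_eq_smul_one_of_isSelfAdjoint (hσ : IsIrreducible σ) {T : E →L[ℂ] E}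
    (hT : IsSelfAdjoint T) (hTσ : ∀ g, Commute T (operator σ g)) : ∃ c : ℂ, T = c • 1 := by
  have := hσ.1
  obtain ⟨c, hc⟩ := ContinuousFunctionalCalculus.spectrum_nonempty (R := ℝ) T hT
  refine ⟨c, ?_⟩
  rw [CFC.eq_algebraMap_of_spectrum_subset_singleton T c
      fun x hx => hσ.subsingleton_spectrum hT hTσ hx hc,
    Algebra.algebraMap_eq_smul_one, Complex.coe_smul]

theorem IsIrreducible.exists_eq_smul_one (hσ : IsIrreducible σ) {T : E →L[ℂ] E}
    (hT : ∀ g, Commute T (operator σ g)) : ∃ c : ℂ, T = c • 1 := by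
  have hstar := commute_star_operator hT
  obtain ⟨x, hx⟩ := hσ.exists_eq_smul_one_of_isSelfAdjoint (realPart T).2 fun g => by
    rw [realPart_apply_coe]
    exact ((hT g).add_left (hstar g)).smul_left _
  obtain ⟨y, hy⟩ := hσ.exists_eq_smul_one_of_isSelfAdjoint (imaginaryPart T).2 fun g => by
    rw [imaginaryPart_apply_coe]
    exact (((hT g).sub_left (hstar g)).smul_left _).smul_left _
  exact ⟨x + Complex.I * y, by
    rw [← realPart_add_I_smul_imaginaryPart T, hx, hy, smul_smul, add_smul]⟩

end Schur

section Domination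

variable [CompleteSpace E] {σ : UnitaryAction G E}

theorem IsIrreducible.exists_eq_smul_of_orbitMap_le (hσ : IsIrreducible σ) {u τ : E} (hu : u ≠ 0)
    {C : ℝ} (hτ : ∀ a, ‖orbitMap σ τ a‖ ≤ C * ‖orbitMap σ u a‖) : ∃ c : ℂ, τ = c • u := by
  have hdense := hσ.denseRange_orbitMap hu
  let T : E →L[ℂ] E := (orbitMap σ τ).extendOfNorm (orbitMap σ u)
  have hT (a) : T (orbitMap σ u a) = orbitMap σ τ a := LinearMap.extendOfNorm_eq hdense ⟨C, hτ⟩ a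
  have hTu (g) : T (σ g u) = σ g τ := by simpa using hT (.single g 1)
  have hcomm (g) : Commute T (operator σ g) := by
    refine DFunLike.coe_injective
      (hdense.equalizer (map_continuous _) (map_continuous _) (funext fun a => ?_))
    calc T (σ g (orbitMap σ u a)) = orbitMap σ τ (a.mapDomain (g * ·)) := by
          rw [map_orbitMap, hT]
      _ = σ g (T (orbitMap σ u a)) := by rw [hT, map_orbitMap]
  obtain ⟨c, hc⟩ := hσ.exists_eq_smul_one hcomm
  exact ⟨c, by simpa [hc, eq_comm] using hTu 1⟩

theorem exists_matrixCoeff_eq_of_groupForm_le {u : E} (hu : DenseRange (orbitMap σ u)) {ξ : G → ℂ}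
    (hξ : ∀ a b, ‖groupForm ξ a b‖ ≤ ‖orbitMap σ u a‖ * ‖orbitMap σ u b‖) :
    ∃ τ : E, ξ = matrixCoeff σ τ u ∧ ∀ a, ‖orbitMap σ τ a‖ ≤ ‖orbitMap σ u a‖ := by
  let ℓ : (G →₀ ℂ) →ₗ[ℂ] ℂ := Finsupp.linearCombination ℂ fun h => ξ h⁻¹
  have hℓ (b) : ‖ℓ b‖ ≤ ‖u‖ * ‖orbitMap σ u b‖ := by
    simpa [groupForm, ℓ, Finsupp.linearCombination_apply] using hξ (.single 1 1) b
  let τ : E := (InnerProductSpace.toDual ℂ E).symm (ℓ.extendOfNorm (orbitMap σ u))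
  have hτ (b) : inner ℂ τ (orbitMap σ u b) = ℓ b := by
    rw [InnerProductSpace.toDual_symm_apply, LinearMap.extendOfNorm_eq hu ⟨_, hℓ⟩]
  have hξτ : ξ = matrixCoeff σ τ u := by
    funext g
    calc ξ g = inner ℂ τ (orbitMap σ u (.single g⁻¹ 1)) := by
          rw [hτ, Finsupp.linearCombination_single, inv_inv, one_smul]
      _ = matrixCoeff σ τ u g := by
          rw [orbitMap_single, one_smul]
          simpa using inner_map_map_eq_matrixCoeff σ τ u 1 g⁻¹
  refine ⟨τ, hξτ, fun a => norm_le_of_denseRange_inner (𝕜 := ℂ) hu (norm_nonneg _) fun b => ?_⟩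
  rw [inner_orbitMap_orbitMap, ← hξτ]
  exact hξ a b

theorem IsIrreducible.eq_mul_matrixCoeff_of_groupForm_le (hσ : IsIrreducible σ) {u : E}
    (hu : ‖u‖ = 1) {ξ : G → ℂ}
    (hξ : ∀ a b, ‖groupForm ξ a b‖ ≤ ‖orbitMap σ u a‖ * ‖orbitMap σ u b‖) (g : G) :
    ξ g = ξ 1 * matrixCoeff σ u u g := by
  have hu0 : u ≠ 0 := norm_ne_zero_iff.1 (hu ▸ one_ne_zero)
  obtain ⟨τ, rfl, hτ⟩ := exists_matrixCoeff_eq_of_groupForm_le (hσ.denseRange_orbitMap hu0) hξ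
  obtain ⟨c, rfl⟩ := hσ.exists_eq_smul_of_orbitMap_le hu0 (C := 1) (by simpa only [one_mul])
  simp [matrixCoeff, inner_self_eq_norm_sq_to_K, hu, mul_comm]

end Domination

section Limits

variable {κ : Type*} {l : Filter κ} {K : κ → Type*} [∀ k, NormedAddCommGroup (K k)]
  [∀ k, InnerProductSpace ℂ (K k)]

theorem exists_tendsto_matrixCoeff_of_norm_le {U : Ultrafilter κ} (ρ : ∀ k, UnitaryAction G (K k))
    {x w : ∀ k, K k} (hxw : ∀ k, ‖x k‖ ≤ ‖w k‖) {r : ℝ}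
    (hw : Tendsto (fun k => ‖w k‖) U (𝓝 r)) (g : G) :
    ∃ z, Tendsto (fun k => matrixCoeff (ρ k) (x k) (w k) g) U (𝓝 z) := by
  have hbdd : ∀ᶠ k in U, matrixCoeff (ρ k) (x k) (w k) g ∈ Metric.closedBall 0 ((r + 1) ^ 2) := by
    filter_upwards [hw.eventually_le_const (lt_add_one r)] with k hk
    rw [mem_closedBall_zero_iff, sq]
    exact (norm_matrixCoeff_le _ _ _ g).trans
      (mul_le_mul ((hxw k).trans hk) hk (norm_nonneg _) ((norm_nonneg _).trans hk))
  obtain ⟨z, -, hz⟩ := (isCompact_closedBall (0 : ℂ) _).ultrafilter_le_nhds' (U.map _) hbdd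
  exact ⟨z, hz⟩

theorem IsIrreducible.tendsto_matrixCoeff_sub [CompleteSpace E] {σ : UnitaryAction G E}
    (hσ : IsIrreducible σ) {u : E} (hu : ‖u‖ = 1) (ρ : ∀ k, UnitaryAction G (K k))
    {x w : ∀ k, K k} (hxw : ∀ k a, ‖orbitMap (ρ k) (x k) a‖ ≤ ‖orbitMap (ρ k) (w k) a‖)
    (hlim : ∀ g, Tendsto (fun k => matrixCoeff (ρ k) (w k) (w k) g) l (𝓝 (matrixCoeff σ u u g)))
    (g : G) :
    Tendsto (fun k => matrixCoeff (ρ k) (x k) (w k) g -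
      inner ℂ (x k) (w k) * matrixCoeff σ u u g) l (𝓝 0) := by
  refine (tendsto_iff_ultrafilter _ _ _).2 fun U hU => ?_
  have hnorm (a) : Tendsto (fun k => ‖orbitMap (ρ k) (w k) a‖) U (𝓝 ‖orbitMap σ u a‖) := by
    have := (tendsto_groupForm (fun g => (hlim g).mono_left hU) a a).norm.sqrt
    simpa [← inner_orbitMap_orbitMap, inner_self_eq_norm_sq_to_K] using this
  choose ξ hξ using exists_tendsto_matrixCoeff_of_norm_le ρ
    (fun k => by simpa using hxw k (.single 1 1)) (by simpa using hnorm (.single 1 1))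
  have hbound (a b) : ‖groupForm ξ a b‖ ≤ ‖orbitMap σ u a‖ * ‖orbitMap σ u b‖ := by
    refine le_of_tendsto_of_tendsto' (tendsto_groupForm hξ a b).norm ((hnorm a).mul (hnorm b))
      fun k => ?_
    rw [← inner_orbitMap_orbitMap]
    exact (norm_inner_le_norm _ _).trans (mul_le_mul_of_nonneg_right (hxw k a) (norm_nonneg _))
  have hone := (hξ 1).mul_const (matrixCoeff σ u u g)
  rw [← hσ.eq_mul_matrixCoeff_of_groupForm_le hu hbound g] at hone
  simpa [matrixCoeff] using (hξ g).sub hone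

end Limits

section DirectSum

variable {J : Type*} [Fintype J] {K : J → Type*} [∀ j, NormedAddCommGroup (K j)]
  [∀ j, InnerProductSpace ℂ (K j)]

/-- The Hilbert direct sum of a finite family of unitary actions. -/
noncomputable def directSum (π : ∀ j, UnitaryAction G (K j)) : UnitaryAction G (PiLp 2 K) where
  toFun g := .piLpCongrRight 2 fun j => π j g
  map_one' := by ext; simp
  map_mul' g h := by ext; simp

theorem directSum_apply (π : ∀ j, UnitaryAction G (K j)) (g : G) (v : PiLp 2 K) (j : J) :
    directSum π g v j = π j g (v j) :=
  rfl

theorem matrixCoeff_directSum (π : ∀ j, UnitaryAction G (K j)) (v w : PiLp 2 K) (g : G) :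
    matrixCoeff (directSum π) v w g = ∑ j, matrixCoeff (π j) (v j) (w j) g := by
  simp only [matrixCoeff, PiLp.inner_apply, directSum_apply]

theorem orbitMap_directSum_apply (π : ∀ j, UnitaryAction G (K j)) (v : PiLp 2 K) (a : G →₀ ℂ)
    (j : J) : orbitMap (directSum π) v a j = orbitMap (π j) (v j) a := by
  simp only [orbitMap, Finsupp.linearCombination_apply, Finsupp.sum, WithLp.ofLp_sum,
    Finset.sum_apply, PiLp.smul_apply, directSum_apply]

theorem norm_orbitMap_directSum_le (π : ∀ j, UnitaryAction G (K j)) {x w : PiLp 2 K} {c : J → ℂ}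
    (hc : ∀ j, ‖c j‖ ≤ 1) (hx : ∀ j, x j = c j • w j) (a : G →₀ ℂ) :
    ‖orbitMap (directSum π) x a‖ ≤ ‖orbitMap (directSum π) w a‖ := by
  refine le_of_sq_le_sq ?_ (norm_nonneg _)
  simp only [PiLp.norm_sq_eq_of_L2, orbitMap_directSum_apply, hx, orbitMap_smul, norm_smul]
  gcongr with j
  exact mul_le_of_le_one_left (norm_nonneg _) (hc j)

end DirectSum

section ConvexCombination

variable {κ : Type*} {l : Filter κ} {J : κ → Type*} [∀ k, Fintype (J k)] {K : ∀ k, J k → Type*}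
  [∀ k j, NormedAddCommGroup (K k j)] [∀ k j, InnerProductSpace ℂ (K k j)]

theorem IsIrreducible.tendsto_sum_norm_matrixCoeff_sub [CompleteSpace E] {σ : UnitaryAction G E}
    (hσ : IsIrreducible σ) {u : E} (hu : ‖u‖ = 1) (π : ∀ k j, UnitaryAction G (K k j))
    {w : ∀ k j, K k j} (hw : ∀ k j, ‖w k j‖ = 1) {t : ∀ k, J k → ℝ} (ht : ∀ k j, 0 ≤ t k j)
    (hlim : ∀ g, Tendsto (fun k => ∑ j, (t k j : ℂ) * matrixCoeff (π k j) (w k j) (w k j) g) l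
      (𝓝 (matrixCoeff σ u u g))) (g : G) :
    Tendsto (fun k => ∑ j, t k j * ‖matrixCoeff (π k j) (w k j) (w k j) g - matrixCoeff σ u u g‖)
      l (𝓝 0) := by
  choose c hc hcψ using fun k j =>
    RCLike.exists_norm_eq_mul_self (matrixCoeff (π k j) (w k j) (w k j) g - matrixCoeff σ u u g)
  let W (k) : PiLp 2 (K k) := WithLp.toLp 2 fun j => ((√(t k j) : ℝ) : ℂ) • w k j
  let X (k) : PiLp 2 (K k) := WithLp.toLp 2 fun j => conj (c k j) • W k j
  have hsqrt (k j) : ((√(t k j) : ℝ) : ℂ) * (√(t k j) : ℝ) = t k j := by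
    rw [← Complex.ofReal_mul, Real.mul_self_sqrt (ht k j)]
  have hW (k g) : matrixCoeff (directSum (π k)) (W k) (W k) g =
      ∑ j, (t k j : ℂ) * matrixCoeff (π k j) (w k j) (w k j) g := by
    simp only [matrixCoeff_directSum, W, matrixCoeff_smul_smul, Complex.conj_ofReal, hsqrt]
  have hX (k g) : matrixCoeff (directSum (π k)) (X k) (W k) g =
      ∑ j, c k j * (t k j * matrixCoeff (π k j) (w k j) (w k j) g) := by
    simp only [matrixCoeff_directSum, X, W, smul_smul, matrixCoeff_smul_smul, map_mul,
      Complex.conj_ofReal, Complex.conj_conj, mul_assoc, ← hsqrt]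
  have hX_one (k) : inner ℂ (X k) (W k) = ∑ j, c k j * (t k j : ℂ) := by
    simpa [matrixCoeff, inner_self_eq_norm_sq_to_K, hw] using hX k 1
  have hdiff (k) : matrixCoeff (directSum (π k)) (X k) (W k) g -
      inner ℂ (X k) (W k) * matrixCoeff σ u u g =
      ((∑ j, t k j * ‖matrixCoeff (π k j) (w k j) (w k j) g - matrixCoeff σ u u g‖ : ℝ) : ℂ) := by
    rw [hX, hX_one, Finset.sum_mul, ← Finset.sum_sub_distrib]
    push_cast
    refine Finset.sum_congr rfl fun j _ => ?_
    rw [← RCLike.ofReal_eq_complex_ofReal, hcψ]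
    ring
  have := hσ.tendsto_matrixCoeff_sub hu (fun k => directSum (π k)) (x := X) (w := W)
    (fun k => norm_orbitMap_directSum_le (π k) (by simp [hc]) fun j => rfl)
    (fun g => by simpa only [hW] using hlim g) g
  simp only [hdiff] at this
  exact Complex.isometry_ofReal.isEmbedding.tendsto_nhds_iff.2 (by simpa only [Complex.ofReal_zero])

end ConvexCombination

section CompactConvergence

variable [TopologicalSpace G] {σ : UnitaryAction G E}

theorem continuous_matrixCoeff {v : E} (hv : Continuous fun g => σ g v) (w : E) :
    Continuous (matrixCoeff σ v w) :=
  hv.inner continuous_const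

theorem exists_isCompact_mem_nhds_one_sub_re_matrixCoeff_le [LocallyCompactSpace G]
    {u : E} (hu : ‖u‖ = 1) (hcont : Continuous fun g => σ g u) {δ : ℝ} (hδ : 0 < δ) :
    ∃ V ∈ 𝓝 (1 : G), IsCompact V ∧ ∀ h ∈ V, 1 - (matrixCoeff σ u u h).re ≤ δ := by
  have hφ : Continuous fun h => 1 - (matrixCoeff σ u u h).re :=
    continuous_const.sub (Complex.continuous_re.comp (continuous_matrixCoeff hcont u))
  have hone : 1 - (matrixCoeff σ u u 1).re < δ := by
    simpa [matrixCoeff, inner_self_eq_norm_sq_to_K, hu] using hδ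
  obtain ⟨V, hV, hVδ, hVcomp⟩ := local_compact_nhds (hφ.continuousAt.eventually_le_const hone)
  exact ⟨V, hV, hVcomp, hVδ⟩

theorem IsIrreducible.eventually_exists_norm_matrixCoeff_sub_lt [IsTopologicalGroup G]
    [LocallyCompactSpace G] [CompleteSpace E] (hσ : IsIrreducible σ) {u : E} (hu : ‖u‖ = 1)
    (hcont : Continuous fun g => σ g u) {κ : Type*} {l : Filter κ} [l.IsCountablyGenerated]
    {J : κ → Type*} [∀ k, Fintype (J k)] {K : ∀ k, J k → Type*}
    [∀ k j, NormedAddCommGroup (K k j)] [∀ k j, InnerProductSpace ℂ (K k j)]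
    (π : ∀ k j, UnitaryAction G (K k j)) {w : ∀ k j, K k j} (hw : ∀ k j, ‖w k j‖ = 1)
    (hπ : ∀ k j, Continuous fun g => π k j g (w k j))
    {t : ∀ k, J k → ℝ} (ht : ∀ k j, 0 ≤ t k j) (hsum : ∀ k, ∑ j, t k j = 1)
    (hlim : ∀ g, Tendsto (fun k => ∑ j, (t k j : ℂ) * matrixCoeff (π k j) (w k j) (w k j) g) l
      (𝓝 (matrixCoeff σ u u g)))
    {C : Set G} (hC : IsCompact C) {ε : ℝ} (hε : 0 < ε) :
    ∀ᶠ k in l, ∃ j, ∀ g ∈ C,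
      ‖matrixCoeff (π k j) (w k j) (w k j) g - matrixCoeff σ u u g‖ < ε := by
  borelize G
  obtain ⟨η, hη, hηε⟩ : ∃ η > 0, 4 * η < ε := ⟨ε / 5, by positivity, by linarith⟩
  obtain ⟨V, hV, hVcomp, hVη⟩ :=
    exists_isCompact_mem_nhds_one_sub_re_matrixCoeff_le hu hcont (δ := η ^ 2 / 2) (by positivity)
  obtain ⟨ν, _, δ, hδ, hνδ⟩ := exists_isFiniteMeasure_forall_exists_notMem hC hVcomp hV
  have hD (k j) : Measurable fun g =>
      ‖matrixCoeff (π k j) (w k j) (w k j) g - matrixCoeff σ u u g‖ :=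
    ((continuous_matrixCoeff (hπ k j) _).sub (continuous_matrixCoeff hcont u)).norm.measurable
  filter_upwards [eventually_exists_measureReal_lt (ν := ν) ht hsum hD
    (fun k j => norm_matrixCoeff_sub_mem_Icc σ (π k j) hu (hw k j))
    (hσ.tendsto_sum_norm_matrixCoeff_sub hu π hw ht hlim)
    (γ := min η (η ^ 2 / 2)) (by positivity) hδ] with k ⟨j, hj⟩
  refine ⟨j, fun g hg => lt_of_le_of_lt ?_ hηε⟩
  obtain ⟨h, hhV, hh, hgh⟩ := hνδ _ (measurableSet_le measurable_const (hD k j)) hj g hg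
  exact norm_matrixCoeff_sub_le_of_mul_right σ (π k j) hu (hw k j) hη.le (hVη h hhV)
    ((not_le.1 hh).le.trans (min_le_right _ _)) ((not_le.1 hgh).le.trans (min_le_left _ _))

end CompactConvergence

end UnitaryAction

open UnitaryAction

theorem unitarily_equiv_of_weak_containment_of_isolated_general
    {G : Type*} [TopologicalSpace G] [Group G] [IsTopologicalGroup G]
    [LocallyCompactSpace G] [SigmaCompactSpace G]
    {ι : Type*} {H : ι → Type u} [∀ n, NormedAddCommGroup (H n)]
    [∀ n, InnerProductSpace ℂ (H n)] [∀ n, CompleteSpace (H n)] (π : ∀ n, UnitaryAction G (H n))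
    (hπcont : ∀ n (v : H n), Continuous fun g => π n g v) (hπirr : ∀ n, IsIrreducible (π n))
    {E : Type*} [NormedAddCommGroup E] [InnerProductSpace ℂ E] [CompleteSpace E]
    (σ : UnitaryAction G E) (hσirr : IsIrreducible σ)
    {u : E} (hu : ‖u‖ = 1) (hσcont : Continuous fun g => σ g u)
    (hweak : ∀ C : Set G, IsCompact C → ∀ ε : ℝ, 0 < ε →
      ∃ (m : ℕ) (idx : Fin m → ι) (w : ∀ j, H (idx j)) (t : Fin m → ℝ),
        (∀ j, ‖w j‖ = 1) ∧ (∀ j, 0 ≤ t j) ∧ (∑ j, t j = 1) ∧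
        ∀ g ∈ C, ‖matrixCoeff σ u u g -
          ∑ j, (t j : ℂ) * matrixCoeff (π (idx j)) (w j) (w j) g‖ < ε)
    (hisolated : ∀ (F : ℕ → Type u) [∀ k, NormedAddCommGroup (F k)]
      [∀ k, InnerProductSpace ℂ (F k)] [∀ k, CompleteSpace (F k)] (ρ : ∀ k, UnitaryAction G (F k)),
      (∀ k (x : F k), Continuous fun g => ρ k g x) → (∀ k, IsIrreducible (ρ k)) →
      ∀ w : ∀ k, F k, (∀ k, ‖w k‖ = 1) →
        (∀ C : Set G, IsCompact C →
          TendstoUniformlyOn (fun k => matrixCoeff (ρ k) (w k) (w k)) (matrixCoeff σ u u)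
            atTop C) →
        ∃ (k : ℕ) (e : F k ≃ₗᵢ[ℂ] E), ∀ g x, e (ρ k g x) = σ g (e x)) :
    ∃ (i : ι) (e : H i ≃ₗᵢ[ℂ] E), ∀ g x, e (π i g x) = σ g (e x) := by
  let K : CompactExhaustion G := default
  choose m idx w t hw ht hsum hwt using fun k : ℕ =>
    hweak (K k) (K.isCompact k) (1 / (k + 1)) Nat.one_div_pos_of_nat
  have hlim (g) := (tendstoUniformlyOn_of_compactExhaustion K hwt isCompact_singleton).tendsto_at
    (Set.mem_singleton g)
  have hnear (k : ℕ) : ∃ (n : ι) (v : H n), ‖v‖ = 1 ∧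
      ∀ g ∈ K k, ‖matrixCoeff σ u u g - matrixCoeff (π n) v v g‖ < 1 / (k + 1) := by
    obtain ⟨k', j, hj⟩ := (hσirr.eventually_exists_norm_matrixCoeff_sub_lt hu hσcont
      (fun k j => π (idx k j)) hw (fun k j => hπcont _ _) ht hsum hlim (K.isCompact k)
      (Nat.one_div_pos_of_nat (n := k))).exists
    exact ⟨_, _, hw k' j, fun g hg => (norm_sub_rev _ _).trans_lt (hj g hg)⟩
  choose n v hv hnear using hnear
  obtain ⟨k, e, he⟩ := hisolated (fun k => H (n k)) (fun k => π (n k)) (fun k => hπcont _)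
    (fun k => hπirr _) v hv fun C hC => tendstoUniformlyOn_of_compactExhaustion K hnear hC
  exact ⟨n k, e, he⟩

/-- **Corollary B.5.**
Let `G` be a locally compact Hausdorff second-countable topological group, `(πₙ, Hₙ)` a
sequence of irreducible unitary representations of `G`, and `(σ, E)` an irreducible unitary
representation of `G`.  Assume (a) `σ` is weakly contained in the Hilbert direct sum of the
`πₙ`, and (b) `σ` is isolated among Fell limits: whenever a sequence of irreducible unitary
representations `(ρₖ, Fₖ)` of `G` has normalized matrix coefficients converging uniformly on
compact subsets of `G` to a normalized matrix coefficient of `σ`, some `ρₖ` is unitarily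
equivalent to `σ`.  Then some `πᵢ` is unitarily equivalent to `σ`. -/
theorem unitarily_equiv_of_weak_containment_of_isolated
    {G : Type u} [TopologicalSpace G] [Group G] [IsTopologicalGroup G]
    [LocallyCompactSpace G] [T2Space G] [SecondCountableTopology G]
    {H : ℕ → Type u} [∀ n, NormedAddCommGroup (H n)] [∀ n, InnerProductSpace ℂ (H n)]
    [∀ n, CompleteSpace (H n)]
    (π : ∀ n, G →* (H n ≃ₗᵢ[ℂ] H n))
    (hπcont : ∀ (n : ℕ) (v : H n), Continuous fun g : G => π n g v)
    (hπirr : ∀ n : ℕ, Nontrivial (H n) ∧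
      ∀ p : Submodule ℂ (H n), IsClosed (p : Set (H n)) →
        (∀ g : G, ∀ v ∈ p, π n g v ∈ p) → p = ⊥ ∨ p = ⊤)
    {E : Type u} [NormedAddCommGroup E] [InnerProductSpace ℂ E] [CompleteSpace E]
    (σ : G →* (E ≃ₗᵢ[ℂ] E))
    (hσcont : ∀ v : E, Continuous fun g : G => σ g v)
    (hσirr : Nontrivial E ∧
      ∀ p : Submodule ℂ E, IsClosed (p : Set E) →
        (∀ g : G, ∀ v ∈ p, σ g v ∈ p) → p = ⊥ ∨ p = ⊤)
    -- (a) weak containment in the Hilbert direct sum of the `πₙ`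
    (hweak : ∀ u : E, ‖u‖ = 1 → ∀ C : Set G, IsCompact C → ∀ ε : ℝ, 0 < ε →
      ∃ (m : ℕ) (idx : Fin m → ℕ) (w : ∀ j : Fin m, H (idx j)) (t : Fin m → ℝ),
        (∀ j, ‖w j‖ = 1) ∧ (∀ j, 0 ≤ t j) ∧ (∑ j, t j = 1) ∧
        ∀ g ∈ C,
          ‖(inner ℂ (σ g u) u : ℂ) -
            ∑ j, (t j : ℂ) * (inner ℂ (π (idx j) g (w j)) (w j) : ℂ)‖ < ε)
    -- (b) `σ` is isolated among Fell limits
    (hisolated : ∀ (F : ℕ → Type u) [∀ k, NormedAddCommGroup (F k)]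
      [∀ k, InnerProductSpace ℂ (F k)] [∀ k, CompleteSpace (F k)]
      (ρ : ∀ k, G →* (F k ≃ₗᵢ[ℂ] F k)),
      (∀ (k : ℕ) (x : F k), Continuous fun g : G => ρ k g x) →
      (∀ k : ℕ, Nontrivial (F k) ∧
        ∀ p : Submodule ℂ (F k), IsClosed (p : Set (F k)) →
          (∀ g : G, ∀ x ∈ p, ρ k g x ∈ p) → p = ⊥ ∨ p = ⊤) →
      ∀ (w : ∀ k : ℕ, F k) (u : E), (∀ k, ‖w k‖ = 1) → ‖u‖ = 1 →
        (∀ C : Set G, IsCompact C →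
          TendstoUniformlyOn (fun (k : ℕ) (g : G) => (inner ℂ (ρ k g (w k)) (w k) : ℂ))
            (fun g : G => (inner ℂ (σ g u) u : ℂ)) atTop C) →
        ∃ (k : ℕ) (e : F k ≃ₗᵢ[ℂ] E), ∀ (g : G) (x : F k), e (ρ k g x) = σ g (e x)) :
    ∃ (i : ℕ) (e : H i ≃ₗᵢ[ℂ] E), ∀ (g : G) (x : H i), e (π i g x) = σ g (e x) := by
  have := hσirr.1
  obtain ⟨u, hu⟩ := exists_norm_eq E zero_le_one
  exact unitarily_equiv_of_weak_containment_of_isolated_general π hπcont hπirr σ hσirr hu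
    (hσcont u) (hweak u hu) fun F _ _ _ ρ hρcont hρirr w hw => hisolated F ρ hρcont hρirr w u hw hu
end

section
/- Let SU(3) denote the special unitary group of 3 × 3 complex matrices and let ι : SU(2) → SU(3) be the embedding sending A ∈ SU(2) to the block-diagonal matrix with blocks A and 1. Then every continuous irreducible finite-dimensional complex representation π of SU(3) has a nonzero vector fixed by π(ι(A)) for every A ∈ SU(2); that is, the subspace of ι(SU(2))-invariant vectors is nonzero. -/
open Module

/-- The block-diagonal embedding of `2 × 2` matrices into `3 × 3` matrices,
`A ↦ diag(A, 1)`. -/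
def blockEmbed (A : Matrix (Fin 2) (Fin 2) ℂ) : Matrix (Fin 3) (Fin 3) ℂ :=
  Matrix.reindex finSumFinEquiv finSumFinEquiv
    (Matrix.fromBlocks A 0 0 (1 : Matrix (Fin 1) (Fin 1) ℂ))

/-!
For a vector `v` and a continuous function `F` on `SU(3)`, put `T F = ∫ F(g) π(g) v dg`. If `F`
depends only on the last row of `g`, then `F` is invariant under left translation by `SU(2)`, so
`T F` is a fixed vector. Suppose that the only fixed vector is `0`. Then `T` kills these functions,
together with their left translates, which are the functions of a combination `x g` of the rows,
`x ∈ ℂ³`. In particular `T` kills every product of entries of `x g` and of their conjugates.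

Polarizing in `x` gives the vanishing of `T` on monomials in the entries of `g` and `ḡ`,
symmetrized over the row indices. Symmetrizing costs nothing in top degree: by `g* = adj g`, the
`2 × 2` minors of `g` are conjugates of entries of `g` up to sign, so transposing two row indices
changes a monomial by one of lower degree. Hence by induction `T` kills all monomials, and by
Stone–Weierstrass `T = 0`. But `T` determines the orbit of `v`, so `v = 0`.
-/

open MvPolynomial in
/-- The substitution `z = x + iy`, `z̄ = x - iy` reduces the claim to the vanishing of a polynomial
on real points. -/
theorem mvPolynomial_eq_zero_of_eval_star_eq_zero {σ : Type*} (P : MvPolynomial (σ ⊕ σ) ℂ)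
    (hP : ∀ z : σ → ℂ, eval (Sum.elim z (star z)) P = 0) : P = 0 := by
  let subst : σ ⊕ σ → MvPolynomial (σ ⊕ σ) ℂ :=
    Sum.elim (fun i => X (.inl i) + C Complex.I * X (.inr i))
      (fun i => X (.inl i) - C Complex.I * X (.inr i))
  have eval_subst (w : σ ⊕ σ → ℂ) :
      eval w (bind₁ subst P) = eval (fun s => eval w (subst s)) P :=
    eval₂Hom_bind₁ _ _ _ _
  have bind_eq_zero : bind₁ subst P = 0 := by
    refine funext_set (fun _ => Set.range ((↑) : ℝ → ℂ))
      (fun _ => Set.infinite_range_of_injective Complex.ofReal_injective) fun w hw => ?_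
    have star_w (s : σ ⊕ σ) : star (w s) = w s := by
      obtain ⟨r, hr⟩ := hw s trivial
      rw [← hr]
      exact Complex.conj_ofReal r
    rw [map_zero, eval_subst, ← hP fun i => w (.inl i) + Complex.I * w (.inr i)]
    congr 2
    ext (i | i)
    · simp [subst]
    · simp only [subst, Sum.elim_inr, map_sub, map_mul, eval_X, eval_C, Pi.star_apply, star_add,
        star_mul', star_w]
      simp [sub_eq_add_neg]
  refine MvPolynomial.funext fun w => ?_
  let v : σ ⊕ σ → ℂ := Sum.elim (fun i => (w (.inl i) + w (.inr i)) / 2)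
    (fun i => (w (.inl i) - w (.inr i)) / (2 * Complex.I))
  have eval_v : (fun s => eval v (subst s)) = w := by
    ext (i | i) <;> simp [subst, v] <;> field_simp <;> ring
  rw [← eval_v, ← eval_subst, bind_eq_zero, map_zero, map_zero]

theorem exists_perm_comp_eq_of_sum_single_eq {ι σ : Type*} [Fintype ι] {i j : ι → σ}
    (hij : ∑ s, Finsupp.single (i s) 1 = ∑ s, Finsupp.single (j s) (1 : ℕ)) :
    ∃ e : Equiv.Perm ι, j ∘ e = i := by
  classical
  have card_fiber (c : σ) : Fintype.card {s // i s = c} = Fintype.card {s // j s = c} := by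
    simpa [Finsupp.single_apply, Fintype.card_subtype] using DFunLike.congr_fun hij c
  exact ⟨Equiv.ofFiberEquiv fun c => Fintype.equivOfCardEq (card_fiber c),
    funext (Equiv.ofFiberEquiv_map _)⟩

theorem eq_zero_of_sum_prod_mul_eq_zero {R ι σ : Type*} [CommRing R] [IsDomain R] [CharZero R]
    [Fintype ι] [DecidableEq ι] [Fintype σ] {f : (ι → σ) → R}
    (hsymm : ∀ (e : Equiv.Perm ι) i, f (i ∘ e) = f i)
    (hf : ∀ x : σ → R, ∑ i, (∏ s, x (i s)) * f i = 0) : f = 0 := by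
  classical
  let deg (i : ι → σ) : σ →₀ ℕ := ∑ s, Finsupp.single (i s) 1
  have sum_monomial : ∑ i, MvPolynomial.monomial (deg i) (f i) = 0 := by
    refine MvPolynomial.funext fun x => ?_
    rw [map_zero, ← hf x, map_sum]
    refine Finset.sum_congr rfl fun i _ => ?_
    rw [← mul_one (f i), ← MvPolynomial.C_mul_monomial, MvPolynomial.monomial_sum_one]
    simp [MvPolynomial.eval_monomial, mul_comm]
  ext i
  have coeff_deg := congrArg (MvPolynomial.coeff (deg i)) sum_monomial
  have eq_of_deg_eq {j : ι → σ} (hj : deg j = deg i) : f j = f i := by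
    obtain ⟨e, rfl⟩ := exists_perm_comp_eq_of_sum_single_eq hj
    exact hsymm e i
  simp only [MvPolynomial.coeff_sum, MvPolynomial.coeff_monomial, MvPolynomial.coeff_zero,
    ← Finset.sum_filter] at coeff_deg
  rw [Finset.sum_congr rfl fun j hj => eq_of_deg_eq (Finset.mem_filter.1 hj).2, Finset.sum_const,
    smul_eq_zero, Finset.card_eq_zero] at coeff_deg
  exact coeff_deg.resolve_left (Finset.nonempty_iff_ne_empty.1 ⟨i, by simp⟩)

theorem eq_zero_of_sum_prod_mul_prod_star_eq_zero {ι κ σ : Type*} [Fintype ι] [DecidableEq ι]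
    [Fintype κ] [DecidableEq κ] [Fintype σ] {f : (ι → σ) → (κ → σ) → ℂ}
    (hsymm_left : ∀ (e : Equiv.Perm ι) i k, f (i ∘ e) k = f i k)
    (hsymm_right : ∀ (e : Equiv.Perm κ) i k, f i (k ∘ e) = f i k)
    (hf : ∀ z : σ → ℂ, ∑ i, ∑ k, (∏ s, z (i s)) * (∏ t, star z (k t)) * f i k = 0) : f = 0 := by
  let P : MvPolynomial (σ ⊕ σ) ℂ := ∑ i, ∑ k,
    (∏ s, MvPolynomial.X (.inl (i s))) * (∏ t, MvPolynomial.X (.inr (k t))) * MvPolynomial.C (f i k)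
  have eval_P (x y : σ → ℂ) : MvPolynomial.eval (Sum.elim x y) P =
      ∑ i, ∑ k, (∏ s, x (i s)) * (∏ t, y (k t)) * f i k := by simp [P, map_prod]
  have P_eq_zero : P = 0 :=
    mvPolynomial_eq_zero_of_eval_star_eq_zero P fun z => (eval_P z (star z)).trans (hf z)
  have sum_right_eq_zero (y : σ → ℂ) : (fun i => ∑ k, (∏ t, y (k t)) * f i k) = 0 := by
    refine eq_zero_of_sum_prod_mul_eq_zero (by simp [hsymm_left]) fun x => ?_
    simp only [Finset.mul_sum, ← mul_assoc]
    rw [← eval_P, P_eq_zero, map_zero]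
  ext i k
  exact congrFun (eq_zero_of_sum_prod_mul_eq_zero (fun e => hsymm_right e i)
    fun y => congrFun (sum_right_eq_zero y) i) k

section Minors

variable {R A m n : Type*} [CommRing R] [CommRing A] [Algebra R A]

variable (R) in
/-- The `R`-module spanned by the entries of a matrix over an `R`-algebra. Its `p`-th
power is spanned by the monomials of degree `p` in the entries. -/
def entrySpan (a : Matrix m n A) : Submodule R A :=
  Submodule.span R (Set.range (Function.uncurry a))

variable (R) in
/-- Every `2 × 2` minor of `a` is a linear combination of the entries of `b`. For `a` the
coordinate functions of `SU(3)` and `b` their conjugates, this is the relation by which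
transposing two factors of a monomial changes it only by a monomial of lower degree. -/
def MinorsMemEntrySpan (a b : Matrix m n A) : Prop :=
  ∀ i i' j j', a i j * a i' j' - a i j' * a i' j ∈ entrySpan R b

theorem entry_mem_entrySpan (a : Matrix m n A) (i : m) (j : n) : a i j ∈ entrySpan R a :=
  Submodule.subset_span ⟨(i, j), rfl⟩

theorem prod_mem_submodule_pow_card {ι : Type*} {M : Submodule R A} {f : ι → A} {s : Finset ι}
    (hf : ∀ i ∈ s, f i ∈ M) : ∏ i ∈ s, f i ∈ M ^ s.card := by
  induction s using Finset.cons_induction with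
  | empty => simpa using ⟨1, map_one _⟩
  | cons i s hi ih =>
    rw [Finset.prod_cons, Finset.card_cons, pow_succ']
    exact Submodule.mul_mem_mul (hf i (by simp)) (ih fun k hk => hf k (by simp [hk]))

theorem entrySpan_pow (a : Matrix m n A) (p : ℕ) : entrySpan R a ^ p =
    Submodule.span R (Set.range fun ij : (Fin p → m) × (Fin p → n) =>
      ∏ s, a (ij.1 s) (ij.2 s)) := by
  rw [entrySpan, Submodule.span_pow]
  congr 1
  ext z
  simp only [Set.mem_pow, List.prod_ofFn, Set.mem_range, Prod.exists]
  constructor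
  · rintro ⟨f, rfl⟩
    choose ij hij using fun s => (f s).2
    exact ⟨fun s => (ij s).1, fun s => (ij s).2, Finset.prod_congr rfl fun s _ => hij s⟩
  · rintro ⟨i, j, rfl⟩
    exact ⟨fun s => ⟨a (i s) (j s), (i s, j s), rfl⟩, rfl⟩

theorem toSubmodule_adjoin_le_iSup_span_pow (s : Set A) :
    Subalgebra.toSubmodule (Algebra.adjoin R s) ≤ ⨆ p : ℕ, Submodule.span R s ^ p := by
  rw [Algebra.adjoin_eq_span, Submodule.span_le]
  intro z hz
  suffices ∃ p : ℕ, z ∈ Submodule.span R s ^ p from Submodule.mem_iSup_of_mem _ this.choose_spec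
  induction hz using Submonoid.closure_induction with
  | mem z hz => exact ⟨1, by simpa using Submodule.subset_span hz⟩
  | one => exact ⟨0, by simpa using ⟨1, map_one _⟩⟩
  | mul y z _ _ hy hz =>
    obtain ⟨⟨p, hp⟩, q, hq⟩ := And.intro hy hz
    exact ⟨p + q, pow_add (Submodule.span R s) p q ▸ Submodule.mul_mem_mul hp hq⟩

variable {ι : Type*} [Fintype ι] {a b : Matrix m n A}

theorem prod_comp_swap_sub_prod_mem [DecidableEq ι] (hab : MinorsMemEntrySpan R a b)
    (i : ι → m) (j : ι → n) {s t : ι} (hst : s ≠ t) :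
    ∏ r, a (i (Equiv.swap s t r)) (j r) - ∏ r, a (i r) (j r) ∈
      entrySpan R b * entrySpan R a ^ (Fintype.card ι - 2) := by
  let rest : Finset ι := {s, t}ᶜ
  have card_rest : rest.card = Fintype.card ι - 2 := by
    rw [Finset.card_compl, Finset.card_pair hst]
  have prod_eq (f : ι → A) : ∏ r, f r = f s * f t * ∏ r ∈ rest, f r := by
    rw [← Finset.prod_pair hst, Finset.prod_mul_prod_compl]
  have prod_rest : ∏ r ∈ rest, a (i (Equiv.swap s t r)) (j r) = ∏ r ∈ rest, a (i r) (j r) := by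
    refine Finset.prod_congr rfl fun r hr => ?_
    simp only [rest, Finset.mem_compl, Finset.mem_insert, Finset.mem_singleton, not_or] at hr
    rw [Equiv.swap_apply_of_ne_of_ne hr.1 hr.2]
  rw [prod_eq, prod_eq, prod_rest, ← sub_mul, Equiv.swap_apply_left, Equiv.swap_apply_right,
    mul_comm (a (i s) (j s)), ← card_rest]
  exact Submodule.mul_mem_mul (hab _ _ _ _)
    (prod_mem_submodule_pow_card fun r _ => entry_mem_entrySpan a (i r) (j r))

theorem map_prod_comp_perm_mul {M : Type*} [AddCommGroup M] [Module R M] {τ : A →ₗ[R] M} {w : A}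
    (hab : MinorsMemEntrySpan R a b)
    (hτ : 2 ≤ Fintype.card ι →
      ∀ z ∈ entrySpan R b * entrySpan R a ^ (Fintype.card ι - 2), τ (z * w) = 0)
    (e : Equiv.Perm ι) (i : ι → m) (j : ι → n) :
    τ ((∏ r, a (i (e r)) (j r)) * w) = τ ((∏ r, a (i r) (j r)) * w) := by
  classical
  induction e using Equiv.Perm.swap_induction_on' generalizing i with
  | one => rfl
  | mul_swap e s t hst ih =>
    have two_le : 2 ≤ Fintype.card ι := Fintype.one_lt_card_iff.2 ⟨s, t, hst⟩
    rw [← ih i, ← sub_eq_zero, ← map_sub, ← sub_mul]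
    exact hτ two_le _ (prod_comp_swap_sub_prod_mem hab (i ∘ e) j hst)

end Minors

section MinorsComplex

variable {A m n : Type*} [CommRing A] [Algebra ℂ A] {a b : Matrix m n A} [Fintype m]

/-- Modulo lower degree, `τ` is symmetric in the row indices of the entries of `a`, and in those
of the entries of `b`, so it is determined by its polarization. -/
theorem map_prod_mul_prod_eq_zero (hab : MinorsMemEntrySpan ℂ a b) (hba : MinorsMemEntrySpan ℂ b a)
    {τ : A →ₗ[ℂ] ℂ} {p q : ℕ}
    (hlow : ∀ p' q', p' + q' < p + q → entrySpan ℂ a ^ p' * entrySpan ℂ b ^ q' ≤ τ.ker)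
    {j : Fin p → n} {l : Fin q → n}
    (hτ : ∀ x : m → ℂ,
      τ ((∏ s, ∑ i, x i • a i (j s)) * ∏ t, ∑ k, star x k • b k (l t)) = 0)
    (i : Fin p → m) (k : Fin q → m) :
    τ ((∏ s, a (i s) (j s)) * ∏ t, b (k t) (l t)) = 0 := by
  have mem_pow {c : Matrix m n A} {r : ℕ} (i : Fin r → m) (j : Fin r → n) :
      ∏ s, c (i s) (j s) ∈ entrySpan ℂ c ^ r := by
    simpa using prod_mem_submodule_pow_card (s := Finset.univ) fun s _ =>
      entry_mem_entrySpan (R := ℂ) c (i s) (j s)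
  suffices (fun (i : Fin p → m) (k : Fin q → m) =>
      τ ((∏ s, a (i s) (j s)) * ∏ t, b (k t) (l t))) = 0 from
    congrFun (congrFun this i) k
  refine eq_zero_of_sum_prod_mul_prod_star_eq_zero (fun e i k => ?_) (fun e i k => ?_) fun x => ?_
  · refine map_prod_comp_perm_mul hab (fun hp z hz => ?_) e i j
    rw [Fintype.card_fin] at hp hz
    refine hlow (p - 2) (q + 1) (by omega) ?_
    rw [pow_succ', ← mul_assoc, mul_comm (entrySpan ℂ a ^ _)]
    exact Submodule.mul_mem_mul hz (mem_pow k l)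
  · simp only [mul_comm (∏ s, a (i s) (j s))]
    refine map_prod_comp_perm_mul hba (fun hq z hz => ?_) e k l
    rw [Fintype.card_fin] at hq hz
    refine hlow (p + 1) (q - 2) (by omega) ?_
    rw [pow_succ, mul_assoc, mul_comm]
    exact Submodule.mul_mem_mul hz (mem_pow i j)
  · rw [← hτ x, Finset.prod_univ_sum, Finset.prod_univ_sum, Finset.sum_mul_sum]
    simp [Finset.prod_smul, mul_assoc, mul_left_comm]

theorem entrySpan_pow_mul_pow_le_ker (hab : MinorsMemEntrySpan ℂ a b)
    (hba : MinorsMemEntrySpan ℂ b a) {τ : A →ₗ[ℂ] ℂ}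
    (hτ : ∀ (p q : ℕ) (j : Fin p → n) (l : Fin q → n) (x : m → ℂ),
      τ ((∏ s, ∑ i, x i • a i (j s)) * ∏ t, ∑ k, star x k • b k (l t)) = 0) (p q : ℕ) :
    entrySpan ℂ a ^ p * entrySpan ℂ b ^ q ≤ τ.ker := by
  induction hd : p + q using Nat.strong_induction_on generalizing p q with
  | _ d ih =>
    rw [entrySpan_pow, entrySpan_pow, Submodule.span_mul_span, Submodule.span_le]
    rintro _ ⟨_, ⟨⟨i, j⟩, rfl⟩, _, ⟨⟨k, l⟩, rfl⟩, rfl⟩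
    exact map_prod_mul_prod_eq_zero hab hba (fun p' q' h => ih (p' + q') (hd ▸ h) p' q' rfl)
      (hτ p q j l) i k

theorem adjoin_entries_le_ker (hab : MinorsMemEntrySpan ℂ a b)
    (hba : MinorsMemEntrySpan ℂ b a) {τ : A →ₗ[ℂ] ℂ}
    (hτ : ∀ (p q : ℕ) (j : Fin p → n) (l : Fin q → n) (x : m → ℂ),
      τ ((∏ s, ∑ i, x i • a i (j s)) * ∏ t, ∑ k, star x k • b k (l t)) = 0) :
    Subalgebra.toSubmodule (Algebra.adjoin ℂ
      (Set.range (Function.uncurry a) ∪ Set.range (Function.uncurry b))) ≤ τ.ker := by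
  rw [Algebra.adjoin_union_coe_submodule]
  refine (mul_le_mul' (toSubmodule_adjoin_le_iSup_span_pow _)
    (toSubmodule_adjoin_le_iSup_span_pow _)).trans ?_
  simp only [Submodule.iSup_mul, Submodule.mul_iSup, iSup_le_iff]
  exact fun p q => entrySpan_pow_mul_pow_le_ker hab hba hτ q p

end MinorsComplex

section SpecialUnitary

open Matrix

variable {n R : Type*} [Fintype n] [DecidableEq n] [CommRing R] [StarRing R]

theorem star_eq_adjugate_of_mem_specialUnitaryGroup {M : Matrix n n R}
    (hM : M ∈ specialUnitaryGroup n R) : star M = M.adjugate := by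
  obtain ⟨hunitary, hdet⟩ := mem_specialUnitaryGroup_iff.1 hM
  have mul_adjugate : M * M.adjugate = 1 := by rw [M.mul_adjugate, hdet, one_smul]
  exact left_inv_eq_right_inv (mem_unitaryGroup_iff'.1 hunitary) mul_adjugate

theorem map_star_mem_specialUnitaryGroup {M : Matrix n n R} (hM : M ∈ specialUnitaryGroup n R) :
    M.map star ∈ specialUnitaryGroup n R := by
  obtain ⟨hunitary, hdet⟩ := mem_specialUnitaryGroup_iff.1 hM
  refine mem_specialUnitaryGroup_iff.2 ⟨map_star_mem_unitaryGroup_iff.2 hunitary, ?_⟩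
  rw [← det_transpose, ← transpose_map, ← conjTranspose.eq_1, det_conjTranspose, hdet, star_one]

/-- As `0 + 1 + 2 = 0` in `Fin 3`, the index completing two distinct ones is minus their sum. -/
theorem exists_minor_eq_zsmul_adjugate {R : Type*} [CommRing R] (M : Matrix (Fin 3) (Fin 3) R)
    (i i' j j' : Fin 3) : ∃ ε : ℤ,
      M i j * M i' j' - M i j' * M i' j = ε • M.adjugate (-(j + j')) (-(i + i')) := by
  refine ⟨(if i = i' then 0 else if i' = i + 1 then 1 else -1) *
    (if j = j' then 0 else if j' = j + 1 then 1 else -1), ?_⟩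
  rw [adjugate_fin_three]
  fin_cases i <;> fin_cases i' <;> fin_cases j <;> fin_cases j' <;> simp <;> ring

theorem minorsMemEntrySpan_map_star {S : Type*} [CommRing S] [Algebra S R]
    {M : Matrix (Fin 3) (Fin 3) R} (hM : M ∈ specialUnitaryGroup (Fin 3) R) :
    MinorsMemEntrySpan S M (M.map star) := by
  intro i i' j j'
  obtain ⟨ε, hε⟩ := exists_minor_eq_zsmul_adjugate M i i' j j'
  rw [hε, ← star_eq_adjugate_of_mem_specialUnitaryGroup hM]
  exact zsmul_mem (entry_mem_entrySpan (M.map star) _ _) ε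

end SpecialUnitary

section SpecialUnitaryComplex

open Matrix

variable {n : Type*} [Fintype n] [DecidableEq n]

instance : IsTopologicalGroup (specialUnitaryGroup n ℂ) where
  continuous_inv := continuous_subtype_val.star.subtype_mk _

instance : CompactSpace (specialUnitaryGroup n ℂ) := by
  have isClosed : IsClosed (specialUnitaryGroup n ℂ : Set (Matrix n n ℂ)) :=
    isClosed_unitary.inter (isClosed_eq continuous_id.matrix_det continuous_const)
  refine isCompact_iff_compactSpace.1
    ((isCompact_closedBall (0 : ℂ) 1).matrix.of_isClosed_subset isClosed fun M hM i j => ?_)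
  simpa using entry_norm_bound_of_unitary (mem_specialUnitaryGroup_iff.1 hM).1 i j

/-- The coordinate functions of `SU(n)`, assembled into a matrix over the continuous functions
on `SU(n)`. -/
def coordMatrix (n : Type*) [Fintype n] [DecidableEq n] :
    Matrix n n C(specialUnitaryGroup n ℂ, ℂ) :=
  of fun i j => ⟨fun g => g.1 i j, continuous_subtype_val.matrix_elem i j⟩

@[simp]
theorem coordMatrix_apply (i j : n) (g : specialUnitaryGroup n ℂ) :
    coordMatrix n i j g = g.1 i j := rfl

theorem coordMatrix_mem_specialUnitaryGroup :
    coordMatrix n ∈ specialUnitaryGroup n C(specialUnitaryGroup n ℂ, ℂ) := by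
  refine mem_specialUnitaryGroup_iff.2 ⟨mem_unitaryGroup_iff.2 ?_, ?_⟩
  · ext i j g
    have hg := congrFun₂ (mem_unitaryGroup_iff.1 (mem_specialUnitaryGroup_iff.1 g.2).1) i j
    rw [mul_apply] at hg
    rw [mul_apply, ContinuousMap.sum_apply]
    refine hg.trans ?_
    simp only [one_apply]
    split_ifs <;> rfl
  · ext g
    rw [ContinuousMap.one_apply, ← (mem_specialUnitaryGroup_iff.1 g.2).2]
    simp [det_apply]

theorem dense_adjoin_coordMatrix :
    Dense (Algebra.adjoin ℂ (Set.range (Function.uncurry (coordMatrix n)) ∪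
      Set.range (Function.uncurry ((coordMatrix n).map star))) :
      Set C(specialUnitaryGroup n ℂ, ℂ)) := by
  let S := StarAlgebra.adjoin ℂ (Set.range (Function.uncurry (coordMatrix n)))
  have closure_eq_top : S.topologicalClosure = ⊤ := by
    refine ContinuousMap.starSubalgebra_topologicalClosure_eq_top_of_separatesPoints S
      fun g h hgh => ?_
    obtain ⟨i, j, hij⟩ : ∃ i j, g.1 i j ≠ h.1 i j := by
      by_contra! heq
      exact hgh (Subtype.ext (Matrix.ext heq))
    exact ⟨_, ⟨coordMatrix n i j, StarAlgebra.subset_adjoin ℂ _ ⟨(i, j), rfl⟩, rfl⟩, hij⟩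
  have star_range : Set.range (Function.uncurry ((coordMatrix n).map star)) =
      star (Set.range (Function.uncurry (coordMatrix n))) := by
    rw [← Set.image_star, ← Set.range_comp]
    rfl
  rw [star_range, ← StarAlgebra.adjoin_toSubalgebra]
  exact dense_iff_closure_eq.2 (congrArg SetLike.coe closure_eq_top)

/-- The `x`-combination of the rows, `g ↦ x g`, as a continuous map on `SU(n)`. -/
def rowCombination (x : n → ℂ) : C(specialUnitaryGroup n ℂ, n → ℂ) :=
  ⟨fun g => x ᵥ* g.1, continuous_const.matrix_vecMul continuous_subtype_val⟩

theorem rowCombination_comp_mulLeft (x : n → ℂ) (h : specialUnitaryGroup n ℂ) :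
    (rowCombination x).comp (ContinuousMap.mulLeft h) = rowCombination (x ᵥ* h.1) := by
  ext1 g
  exact (vecMul_vecMul x h.1 g.1).symm

theorem eq_zero_of_map_comp_rowCombination_eq_zero {E : Type*} [NormedAddCommGroup E]
    [NormedSpace ℂ E] {T : C(specialUnitaryGroup (Fin 3) ℂ, ℂ) →L[ℂ] E}
    (hT : ∀ (φ : C(Fin 3 → ℂ, ℂ)) (x : Fin 3 → ℂ), T (φ.comp (rowCombination x)) = 0) :
    T = 0 := by
  let coord := coordMatrix (Fin 3)
  have hcoord : coord ∈ specialUnitaryGroup (Fin 3) _ := coordMatrix_mem_specialUnitaryGroup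
  have minors : MinorsMemEntrySpan ℂ coord (coord.map star) := minorsMemEntrySpan_map_star hcoord
  have minors_star : MinorsMemEntrySpan ℂ (coord.map star) coord := by
    simpa [Function.comp_def] using
      minorsMemEntrySpan_map_star (S := ℂ) (map_star_mem_specialUnitaryGroup hcoord)
  ext F
  refine SeparatingDual.eq_zero_of_forall_dual_eq_zero (R := ℂ) fun ℓ => ?_
  have adjoin_le := adjoin_entries_le_ker minors minors_star (τ := (ℓ ∘L T).toLinearMap)
    fun p q j l x => by
      let φ : C(Fin 3 → ℂ, ℂ) :=
        ⟨fun y => (∏ s, y (j s)) * ∏ t, star (y (l t)), by fun_prop⟩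
      suffices (∏ s, ∑ i, x i • coord i (j s)) * ∏ t, ∑ k, star x k • coord.map star k (l t) =
          φ.comp (rowCombination x) by
        rw [this]
        simp [hT]
      ext g
      simp [φ, coord, rowCombination, vecMul, dotProduct]
  exact (ℓ ∘L T).isClosed_ker.closure_subset_iff.2 adjoin_le (dense_adjoin_coordMatrix F)

theorem exists_mem_unitaryGroup_row_eq (i : n) {u : EuclideanSpace ℂ n} (hu : ‖u‖ = 1) :
    ∃ U ∈ unitaryGroup n ℂ, U i = u.ofLp := by
  have orthonormal_singleton : Orthonormal ℂ (({i} : Set n).domRestrict fun _ => u) :=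
    ⟨fun _ => hu, fun j k hjk => absurd (Subsingleton.elim j k) hjk⟩
  obtain ⟨b, hb⟩ := orthonormal_singleton.exists_orthonormalBasis_extension_of_card_eq (by simp)
  let B := (EuclideanSpace.basisFun n ℂ).toBasis.toMatrix b
  have hB : B ∈ unitaryGroup n ℂ := OrthonormalBasis.toMatrix_orthonormalBasis_mem_unitary _ _
  refine ⟨Bᵀ, transpose_mem_unitaryGroup_iff.2 hB, ?_⟩
  ext j
  simp [B, Basis.toMatrix_apply, hb i rfl]

theorem exists_smul_mem_specialUnitaryGroup [Nonempty n] {U : Matrix n n ℂ}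
    (hU : U ∈ unitaryGroup n ℂ) : ∃ ω : ℂ, ω ≠ 0 ∧ ω • U ∈ specialUnitaryGroup n ℂ := by
  have norm_det : ‖U.det‖ = 1 := CStarRing.norm_of_mem_unitary (det_of_mem_unitary hU)
  have det_ne_zero : U.det ≠ 0 := norm_ne_zero_iff.1 (by simp [norm_det])
  obtain ⟨ω, hω⟩ := IsAlgClosed.exists_pow_nat_eq (U.det)⁻¹ (Fintype.card_pos (α := n))
  have norm_ω : ‖ω‖ = 1 := by
    rw [← pow_eq_one_iff_of_nonneg (norm_nonneg ω) (Fintype.card_ne_zero (α := n)), ← norm_pow, hω,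
      norm_inv, norm_det, inv_one]
  have ω_mem : ω ∈ unitary ℂ := by
    rw [Unitary.mem_iff_self_mul_star, Complex.star_def, Complex.mul_conj']
    simp [norm_ω]
  refine ⟨ω, norm_ne_zero_iff.1 (by simp [norm_ω]), mem_specialUnitaryGroup_iff.2 ⟨?_, ?_⟩⟩
  · exact Unitary.smul_mem_of_mem ω_mem hU
  · rw [det_smul, hω, inv_mul_cancel₀ det_ne_zero]

theorem exists_eq_single_vecMul (i : n) (x : n → ℂ) :
    ∃ (r : ℂ) (g : specialUnitaryGroup n ℂ), x = Pi.single i r ᵥ* g.1 := by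
  have : Nonempty n := ⟨i⟩
  obtain rfl | hx := eq_or_ne x 0
  · exact ⟨0, 1, by simp⟩
  let y : EuclideanSpace ℂ n := WithLp.toLp 2 x
  have hy : y ≠ 0 := by simpa [y] using hx
  have norm_y_ne_zero : (‖y‖ : ℂ) ≠ 0 := by simpa using hy
  have norm_eq_one : ‖(‖y‖ : ℂ)⁻¹ • y‖ = 1 := norm_smul_inv_norm hy
  obtain ⟨U, hU, row_U⟩ := exists_mem_unitaryGroup_row_eq i norm_eq_one
  obtain ⟨ω, hω, hωU⟩ := exists_smul_mem_specialUnitaryGroup hU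
  refine ⟨‖y‖ * ω⁻¹, ⟨ω • U, hωU⟩, ?_⟩
  ext j
  simp only [single_vecMul, Pi.smul_apply, row_apply, Matrix.smul_apply, row_U, PiLp.smul_apply,
    smul_eq_mul]
  field_simp
  rfl

end SpecialUnitaryComplex

section IntegralSMul

open MeasureTheory

variable {X E : Type*} [TopologicalSpace X] [CompactSpace X] [MeasurableSpace X] [BorelSpace X]
  [NormedAddCommGroup E] {μ : Measure X} [IsFiniteMeasure μ]

theorem integrable_continuousMap (u : C(X, E)) : Integrable u μ :=
  u.continuous.integrable_of_hasCompactSupport (HasCompactSupport.of_compactSpace u)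

variable [NormedSpace ℂ E]

/-- The vector-valued measure `u μ`, as the functional `F ↦ ∫ F u dμ` on continuous functions. For
`u` an orbit map `g ↦ π g v` of a representation, this is the action of `F` on `v`. -/
noncomputable def integralSMul (μ : Measure X) [IsFiniteMeasure μ] (u : C(X, E)) :
    C(X, ℂ) →L[ℂ] E :=
  LinearMap.mkContinuous
    { toFun F := ∫ x, F x • u x ∂μ
      map_add' F F' := by
        simp only [ContinuousMap.add_apply, add_smul]
        exact integral_add (integrable_continuousMap (F • u)) (integrable_continuousMap (F' • u))
      map_smul' c F := by
        simp only [ContinuousMap.smul_apply, smul_assoc, integral_smul, RingHom.id_apply] }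
    (‖u‖ * μ.real Set.univ) fun F => by
      refine (norm_integral_le_of_norm_le_const (C := ‖F‖ * ‖u‖) (.of_forall fun x => ?_)).trans_eq
        (by ring)
      rw [norm_smul]
      exact mul_le_mul (F.norm_coe_le_norm x) (u.norm_coe_le_norm x) (norm_nonneg _) (norm_nonneg _)

theorem map_integralSMul [CompleteSpace E] {E' : Type*} [NormedAddCommGroup E'] [NormedSpace ℂ E']
    [CompleteSpace E'] (L : E →L[ℂ] E') (u : C(X, E)) (F : C(X, ℂ)) :
    L (integralSMul μ u F) = integralSMul μ ((L : C(E, E')).comp u) F := by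
  refine (L.integral_comp_comm (integrable_continuousMap (F • u))).symm.trans ?_
  exact integral_congr_ae (.of_forall fun x => L.map_smul (F x) (u x))

theorem integralSMul_ne_zero [CompleteSpace E] [μ.IsOpenPosMeasure] {u : C(X, E)} (hu : u ≠ 0) :
    integralSMul μ u ≠ 0 := by
  obtain ⟨x, hx⟩ := DFunLike.ne_iff.1 hu
  obtain ⟨ℓ, hℓ⟩ := SeparatingDual.exists_ne_zero (R := ℂ) hx
  have integral_pos : 0 < ∫ y, ‖ℓ (u y)‖ ^ 2 ∂μ :=
    Continuous.integral_pos_of_hasCompactSupport_nonneg_nonzero (by fun_prop)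
      (HasCompactSupport.of_compactSpace _) (fun y => by positivity) (x := x) (by simpa using hℓ)
  have apply_eq : ℓ (integralSMul μ u (star ((ℓ : C(E, ℂ)).comp u))) =
      (∫ y, ‖ℓ (u y)‖ ^ 2 ∂μ : ℝ) := by
    rw [map_integralSMul]
    refine (integral_congr_ae (.of_forall fun y => ?_)).trans integral_ofReal
    simp [Complex.conj_mul']
  intro h
  rw [h, zero_apply, map_zero, eq_comm, Complex.ofReal_eq_zero] at apply_eq
  exact integral_pos.ne' apply_eq

theorem map_integralSMul_comp_mulLeft {G : Type*} [Group G] [TopologicalSpace G]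
    [ContinuousMul G] [CompactSpace G] [MeasurableSpace G] [BorelSpace G] {μ : Measure G}
    [IsFiniteMeasure μ] [μ.IsMulLeftInvariant] [CompleteSpace E] {u : C(G, E)} {L : E →L[ℂ] E}
    {h : G} (hu : ∀ g, L (u g) = u (h * g)) (F : C(G, ℂ)) :
    L (integralSMul μ u (F.comp (ContinuousMap.mulLeft h))) = integralSMul μ u F := by
  have translate : (L : C(E, E)).comp u = u.comp (ContinuousMap.mulLeft h) :=
    ContinuousMap.ext hu
  rw [map_integralSMul, translate]
  exact integral_mul_left_eq_self (fun g => F g • u g) h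

end IntegralSMul

open Matrix in
theorem single_two_vecMul_blockEmbed (r : ℂ) (A : Matrix (Fin 2) (Fin 2) ℂ) :
    Pi.single 2 r ᵥ* blockEmbed A = Pi.single 2 r := by
  have symm_zero : (finSumFinEquiv (m := 2) (n := 1)).symm 0 = .inl 0 := rfl
  have symm_one : (finSumFinEquiv (m := 2) (n := 1)).symm 1 = .inl 1 := rfl
  have symm_two : (finSumFinEquiv (m := 2) (n := 1)).symm 2 = .inr 0 := rfl
  ext j
  fin_cases j <;> simp [single_vecMul, blockEmbed, symm_zero, symm_one, symm_two]

open Matrix in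
theorem exists_nonzero_su2_fixed_vector_general {V : Type*} [NormedAddCommGroup V]
    [NormedSpace ℂ V] [CompleteSpace V] [Nontrivial V]
    (π : specialUnitaryGroup (Fin 3) ℂ →* (V →L[ℂ] V))
    (hcont : ∀ v : V, Continuous fun g : specialUnitaryGroup (Fin 3) ℂ => π g v) :
    ∃ v : V, v ≠ 0 ∧ ∀ (A : specialUnitaryGroup (Fin 2) ℂ) (g : specialUnitaryGroup (Fin 3) ℂ),
      g.1 = blockEmbed A.1 → π g v = v := by
  borelize ↥(specialUnitaryGroup (Fin 3) ℂ)
  by_contra! no_fixed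
  obtain ⟨v, hv⟩ := exists_ne (0 : V)
  let orbit : C(specialUnitaryGroup (Fin 3) ℂ, V) := ⟨fun g => π g v, hcont v⟩
  let T := integralSMul MeasureTheory.Measure.haar orbit
  have equivariant (h) (F) : π h (T (F.comp (ContinuousMap.mulLeft h))) = T F :=
    map_integralSMul_comp_mulLeft (fun g => by simp [orbit]) F
  have map_rowCombination_single (φ : C(Fin 3 → ℂ, ℂ)) (r : ℂ) :
      T (φ.comp (rowCombination (Pi.single 2 r))) = 0 := by
    by_contra hne
    obtain ⟨A, g, hg, not_fixed⟩ := no_fixed _ hne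
    refine not_fixed ?_
    conv_rhs => rw [← equivariant g, ContinuousMap.comp_assoc, rowCombination_comp_mulLeft, hg,
      single_two_vecMul_blockEmbed]
  refine integralSMul_ne_zero (u := orbit) (DFunLike.ne_iff.2 ⟨1, by simpa [orbit]⟩)
    (eq_zero_of_map_comp_rowCombination_eq_zero fun φ x => ?_ : T = 0)
  obtain ⟨r, g, rfl⟩ := exists_eq_single_vecMul 2 x
  have map_eq_zero := equivariant g (φ.comp (rowCombination (Pi.single 2 r)))
  rw [map_rowCombination_single, ContinuousMap.comp_assoc,
    rowCombination_comp_mulLeft] at map_eq_zero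
  simpa [← mul_apply_eq_comp, ← map_mul] using congrArg (π g⁻¹) map_eq_zero

/-- **Branching claim in the proof of Lemma A.3 (Gelfand–Zetlin).**
Every continuous irreducible finite-dimensional complex representation `π` of `SU(3)` has a
nonzero vector fixed by `π(ι(A))` for every `A ∈ SU(2)`, where `ι : SU(2) → SU(3)` is the
block-diagonal embedding `A ↦ diag(A, 1)`. -/
theorem exists_nonzero_su2_fixed_vector {V : Type*} [NormedAddCommGroup V]
    [NormedSpace ℂ V] [FiniteDimensional ℂ V]
    (π : Matrix.specialUnitaryGroup (Fin 3) ℂ →* (V ≃ₗ[ℂ] V))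
    (hcont : ∀ v : V, Continuous fun g : Matrix.specialUnitaryGroup (Fin 3) ℂ => π g v)
    (hnontriv : Nontrivial V)
    (hirr : ∀ p : Submodule ℂ V,
      (∀ g : Matrix.specialUnitaryGroup (Fin 3) ℂ, ∀ v ∈ p, π g v ∈ p) → p = ⊥ ∨ p = ⊤) :
    ∃ v : V, v ≠ 0 ∧ ∀ (A : Matrix.specialUnitaryGroup (Fin 2) ℂ)
      (g : Matrix.specialUnitaryGroup (Fin 3) ℂ),
      (g : Matrix (Fin 3) (Fin 3) ℂ) = blockEmbed (A : Matrix (Fin 2) (Fin 2) ℂ) →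
      π g v = v :=
  have : CompleteSpace V := FiniteDimensional.complete ℂ V
  exists_nonzero_su2_fixed_vector_general
    ((Module.End.toContinuousLinearMap V).toMonoidHom.comp
      (LinearEquiv.automorphismGroup.toLinearMapMonoidHom.comp π)) hcont
end
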